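/- Let x₀ ∈ ℝ, σ ∈ (0,√2), and let φ : (−∞,0]×ℝ → ℝ be a classical solution of φ_t = φ_xx + f′(w(x + x₀)) φ satisfying |φ(t,x)| ≤ C e^{σ|x|} for all (t,x) ∈ (−∞,0]×ℝ and some C > 0, together with the orthogonality condition ∫_ℝ φ(t,x) w′(x + x₀) dx = 0 for every t ≤ 0. Then φ ≡ 0 on (−∞,0]×ℝ. -/

import Mathlib

open Real MeasureTheory

noncomputable section

/-- The heteroclinic profile `w(s) = tanh(s/√2)`. -/
def w (s : ℝ) : ℝ := Real.tanh (s / Real.sqrt 2)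

/-- `w'`. -/
def w1 (s : ℝ) : ℝ := deriv w s

/-- The Allen–Cahn nonlinearity `f(v) = v(1-v²)`. -/
def f (v : ℝ) : ℝ := v * (1 - v ^ 2)

/-- `f'`. -/
def f1 (v : ℝ) : ℝ := deriv f v

/-! Dividing `φ` by the ground state `w'(· + x₀)`, which after rescaling is `cosh ^ (-2)`, turns the
linearized equation into `∂ₜq = ∂ₓ²q - 2 m tanh x ∂ₓq` with `m = 2`; the growth bound on `φ` makes
`∂ₓq` grow at most like `cosh x ^ l` for some `l < 2 m`. The maximum principle for the doubled
function `q t X - q t Y` on `Y ≤ X`, with a barrier that decays exponentially in time, shows that an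
ancient `q` and also `-q` are nonincreasing in `x`, so `φ t` is a multiple of `w'(· + x₀)`, and
orthogonality makes the multiple zero.

Compactness arguments need joint continuity of `φ`, while only separate differentiability is given.
If there were discontinuities, Baire would give a box at whose bad points `φ` obeys uniform
Lipschitz bounds along both axes. A maximum principle with barriers that remove the corners of boxes
controls `φ` after a bad time, and an interior Lipschitz estimate, proved by comparing `φ` with its
reflection, controls it before; together they force continuity in that box. -/

open Set Filter Topology

/-- The heat operator of `u` at the single point `(t, x)`: the partial derivatives `∂ₜu` and
`∂ₓ²u` exist there and `∂ₜu - ∂ₓ²u = c`. No joint regularity of `u` is implied. -/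
def HasHeatOpAt (u : ℝ → ℝ → ℝ) (c t x : ℝ) : Prop :=
  ∃ (d : ℝ → ℝ) (a e : ℝ), (∀ᶠ y in 𝓝 x, HasDerivAt (u t) (d y) y) ∧ HasDerivAt d e x ∧
    HasDerivAt (fun s => u s x) a t ∧ a - e = c

namespace HasHeatOpAt

variable {u v : ℝ → ℝ → ℝ} {b c t x : ℝ}

lemma differentiableAt_time (hu : HasHeatOpAt u c t x) :
    DifferentiableAt ℝ (fun s => u s x) t :=
  let ⟨_, _, _, _, _, ht, _⟩ := hu
  ht.differentiableAt

lemma differentiableAt_space (hu : HasHeatOpAt u c t x) : DifferentiableAt ℝ (u t) x :=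
  let ⟨_, _, _, hd, _⟩ := hu
  hd.self_of_nhds.differentiableAt

lemma sub (hu : HasHeatOpAt u b t x) (hv : HasHeatOpAt v c t x) :
    HasHeatOpAt (fun s y => u s y - v s y) (b - c) t x := by
  obtain ⟨d, a, e, hd, he, ha, rfl⟩ := hu
  obtain ⟨d', a', e', hd', he', ha', rfl⟩ := hv
  refine ⟨fun y => d y - d' y, a - a', e - e', ?_, he.sub he', ha.sub ha', by ring⟩
  filter_upwards [hd, hd'] with y hy hy' using hy.sub hy'

lemma neg (hu : HasHeatOpAt u c t x) : HasHeatOpAt (fun s y => -u s y) (-c) t x := by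
  obtain ⟨d, a, e, hd, he, ha, rfl⟩ := hu
  refine ⟨fun y => -d y, -a, -e, ?_, he.neg, ha.neg, by ring⟩
  filter_upwards [hd] with y hy using hy.neg

lemma add (hu : HasHeatOpAt u b t x) (hv : HasHeatOpAt v c t x) :
    HasHeatOpAt (fun s y => u s y + v s y) (b + c) t x := by
  simpa only [sub_neg_eq_add] using hu.sub hv.neg

lemma of_time {g : ℝ → ℝ} {a : ℝ} (hg : HasDerivAt g a t) (x : ℝ) :
    HasHeatOpAt (fun s _ => g s) a t x :=
  ⟨fun _ => 0, a, 0, .of_forall fun y => hasDerivAt_const y (g t), hasDerivAt_const x 0, hg,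
    sub_zero a⟩

lemma of_space {g d : ℝ → ℝ} {e : ℝ} (hg : ∀ y, HasDerivAt g (d y) y) (hd : HasDerivAt d e x)
    (t : ℝ) : HasHeatOpAt (fun _ y => g y) (-e) t x :=
  ⟨d, 0, e, .of_forall hg, hd, hasDerivAt_const t (g x), zero_sub e⟩

lemma time_mul {g : ℝ → ℝ} {a : ℝ} (hg : HasDerivAt g a t) (hu : HasHeatOpAt u c t x) :
    HasHeatOpAt (fun s y => g s * u s y) (a * u t x + g t * c) t x := by
  obtain ⟨d, a', e, hd, he, ha, rfl⟩ := hu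
  refine ⟨fun y => g t * d y, _, _, ?_, he.const_mul _, hg.fun_mul ha, by ring⟩
  filter_upwards [hd] with y hy using hy.const_mul _

lemma const_mul (k : ℝ) (hu : HasHeatOpAt u c t x) :
    HasHeatOpAt (fun s y => k * u s y) (k * c) t x := by
  simpa only [zero_mul, zero_add] using hu.time_mul (hasDerivAt_const t k)

lemma mul_space {g d : ℝ → ℝ} {e : ℝ} (hu : HasHeatOpAt u c t x)
    (hg : ∀ y, HasDerivAt g (d y) y) (hd : HasDerivAt d e x) :
    HasHeatOpAt (fun s y => u s y * g y)
      (c * g x - 2 * (deriv (u t) x * d x) - u t x * e) t x := by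
  obtain ⟨d', a, e', hd', he, ha, rfl⟩ := hu
  refine ⟨fun y => d' y * g y + u t y * d y, _, _, ?_,
    (he.fun_mul (hg x)).fun_add (hd'.self_of_nhds.fun_mul hd), ha.mul_const _, ?_⟩
  · filter_upwards [hd'] with y hy using hy.fun_mul (hg y)
  · rw [hd'.self_of_nhds.deriv]
    ring

lemma comp_affine {k r b : ℝ} (hu : HasHeatOpAt u c (k ^ 2 * t + r) (k * x + b)) :
    HasHeatOpAt (fun s y => u (k ^ 2 * s + r) (k * y + b)) (k ^ 2 * c) t x := by
  obtain ⟨d, a, e, hd, he, ha, rfl⟩ := hu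
  have haff (y : ℝ) : HasDerivAt (fun z : ℝ => k * z + b) k y := by
    simpa using ((hasDerivAt_id y).const_mul k).add_const b
  have htime : HasDerivAt (fun s : ℝ => k ^ 2 * s + r) (k ^ 2) t := by
    simpa using ((hasDerivAt_id t).const_mul (k ^ 2)).add_const r
  refine ⟨fun y => d (k * y + b) * k, a * k ^ 2, e * k * k, ?_,
    (he.comp x (haff x)).mul_const k, ha.comp (h₂ := fun s => u s (k * x + b)) t htime, by ring⟩
  filter_upwards [(haff x).continuousAt.eventually hd] with y hy using hy.comp y (haff y)

lemma comp_sub {r b : ℝ} (hu : HasHeatOpAt u c (t - r) (x - b)) :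
    HasHeatOpAt (fun s y => u (s - r) (y - b)) c t x := by
  have h : HasHeatOpAt u c (1 ^ 2 * t + -r) (1 * x + -b) := by
    simpa only [one_pow, one_mul, ← sub_eq_add_neg] using hu
  simpa only [one_pow, one_mul, ← sub_eq_add_neg] using h.comp_affine

lemma congr_value (hu : HasHeatOpAt u b t x) (h : b = c) : HasHeatOpAt u c t x := h ▸ hu

end HasHeatOpAt

lemma second_hasDerivAt_nonpos_of_isLocalMax {g d : ℝ → ℝ} {x e : ℝ} (hmax : IsLocalMax g x)
    (hd : ∀ᶠ y in 𝓝 x, HasDerivAt g (d y) y) (he : HasDerivAt d e x) : e ≤ 0 := by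
  have hderiv : deriv g =ᶠ[𝓝 x] d := hd.mono fun y hy => hy.deriv
  have hsecond : deriv (deriv g) x = e := by rw [hderiv.deriv_eq, he.deriv]
  by_contra! hpos
  have hmin : IsLocalMin g x :=
    isLocalMin_of_deriv_deriv_pos (hsecond ▸ hpos) hmax.deriv_eq_zero
      hd.self_of_nhds.continuousAt
  have hconst : g =ᶠ[𝓝 x] fun _ => g x := by
    filter_upwards [hmax, hmin] with y using le_antisymm
  have hzero : deriv (deriv g) x = 0 := by
    rw [hconst.deriv.deriv_eq]
    simp
  linarith

lemma hasDerivAt_nonneg_of_eventually_le_nhdsLT {g : ℝ → ℝ} {a t : ℝ} (hg : HasDerivAt g a t)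
    (hmax : ∀ᶠ s in 𝓝[<] t, g s ≤ g t) : 0 ≤ a := by
  have hslope := (hasDerivWithinAt_iff_tendsto_slope' (s := Iio t) (lt_irrefl t)).1
    hg.hasDerivWithinAt
  refine ge_of_tendsto hslope ?_
  filter_upwards [hmax, self_mem_nhdsWithin] with s hs hst
  rw [slope_def_field]
  exact div_nonneg_of_nonpos (sub_nonpos.2 hs) (sub_nonpos.2 (mem_Iio.1 hst).le)

/-- At a positive maximum `∂ₓ²z ≤ 0 ≤ ∂ₜz`. -/
theorem nonpos_of_heatOp_neg {S K : Set (ℝ × ℝ)} {z : ℝ → ℝ → ℝ} (hK : IsCompact K)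
    (hKS : K ⊆ S) (hz : ContinuousOn (Function.uncurry z) K)
    (hout : ∀ t x, (t, x) ∈ S → (t, x) ∉ K → z t x ≤ 0)
    (hop : ∀ t x, (t, x) ∈ S → 0 < z t x → (∀ᶠ s in 𝓝[<] t, (s, x) ∈ S) ∧
      (∀ᶠ y in 𝓝 x, (t, y) ∈ S) ∧ ∃ c < 0, HasHeatOpAt z c t x) :
    ∀ t x, (t, x) ∈ S → z t x ≤ 0 := by
  intro t₀ x₀ hS
  by_contra! hpos₀
  have hK₀ : (t₀, x₀) ∈ K := by_contra fun h => hpos₀.not_ge (hout t₀ x₀ hS h)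
  obtain ⟨⟨t, x⟩, htx, hmaxK⟩ := hK.exists_isMaxOn ⟨_, hK₀⟩ hz
  have hpos : 0 < z t x := hpos₀.trans_le (hmaxK hK₀)
  have hmax (s y : ℝ) (hsy : (s, y) ∈ S) : z s y ≤ z t x :=
    (em ((s, y) ∈ K)).elim (fun h => hmaxK h) fun h => (hout s y hsy h).trans hpos.le
  obtain ⟨htime, hspace, c, hc, d, a, e, hd, he, ha, rfl⟩ := hop t x (hKS htx) hpos
  have he_nonpos : e ≤ 0 :=
    second_hasDerivAt_nonpos_of_isLocalMax (hspace.mono fun y => hmax t y) hd he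
  have ha_nonneg : 0 ≤ a :=
    hasDerivAt_nonneg_of_eventually_le_nhdsLT ha (htime.mono fun s => hmax s x)
  linarith

/-! ### Maximum principles with barriers -/

/-- A nonnegative supersolution of the heat equation on `S` which is proper: it exceeds every
constant off a compact part of `S`. Maximum principles on `S` need no control of the solution,
beyond an upper bound, near the ends of `S` where a barrier blows up. -/
structure IsHeatBarrier (W : ℝ → ℝ → ℝ) (S : Set (ℝ × ℝ)) : Prop where
  continuousOn : ContinuousOn (Function.uncurry W) S
  nonneg : ∀ t x, (t, x) ∈ S → 0 ≤ W t x
  heatOp_nonneg : ∀ t x, (t, x) ∈ S → ∃ c, 0 ≤ c ∧ HasHeatOpAt W c t x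
  proper : ∀ A, ∃ K ⊆ S, IsCompact K ∧ ∀ t x, (t, x) ∈ S → (t, x) ∉ K → A ≤ W t x

namespace IsHeatBarrier

variable {V W : ℝ → ℝ → ℝ} {S T : Set (ℝ × ℝ)}

lemma zero (hS : IsCompact S) : IsHeatBarrier (fun _ _ => 0) S where
  continuousOn := continuousOn_const
  nonneg _ _ _ := le_rfl
  heatOp_nonneg t x _ := ⟨0, le_rfl, HasHeatOpAt.of_time (hasDerivAt_const t 0) x⟩
  proper _ := ⟨S, Subset.rfl, hS, fun _ _ h h' => absurd h h'⟩

lemma add (hV : IsHeatBarrier V S) (hW : IsHeatBarrier W T) :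
    IsHeatBarrier (fun t x => V t x + W t x) (S ∩ T) where
  continuousOn := (hV.continuousOn.mono inter_subset_left).add
    (hW.continuousOn.mono inter_subset_right)
  nonneg t x h := add_nonneg (hV.nonneg t x h.1) (hW.nonneg t x h.2)
  heatOp_nonneg t x h := by
    obtain ⟨b, hb, hVb⟩ := hV.heatOp_nonneg t x h.1
    obtain ⟨c, hc, hWc⟩ := hW.heatOp_nonneg t x h.2
    exact ⟨b + c, add_nonneg hb hc, hVb.add hWc⟩
  proper A := by
    obtain ⟨K, hKS, hK, hVK⟩ := hV.proper A
    obtain ⟨L, hLT, hL, hWL⟩ := hW.proper A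
    refine ⟨K ∩ L, inter_subset_inter hKS hLT, hK.inter hL, fun t x h hout => ?_⟩
    by_cases htx : (t, x) ∈ K
    · linarith [hV.nonneg t x h.1, hWL t x h.2 fun h' => hout ⟨htx, h'⟩]
    · linarith [hW.nonneg t x h.2, hVK t x h.1 htx]

/-- The maximum principle applied to `u - ε W` on the compact part of `S` where `ε W` stays below
the upper bound of `u`, in the limit `ε → 0`. -/
theorem nonpos_of_heatOp_neg {u : ℝ → ℝ → ℝ} {B : ℝ} (hW : IsHeatBarrier W S)
    (hu : ContinuousOn (Function.uncurry u) S) (hB : ∀ t x, (t, x) ∈ S → u t x ≤ B)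
    (hop : ∀ t x, (t, x) ∈ S → 0 < u t x → (∀ᶠ s in 𝓝[<] t, (s, x) ∈ S) ∧
      (∀ᶠ y in 𝓝 x, (t, y) ∈ S) ∧ ∃ c < 0, HasHeatOpAt u c t x) :
    ∀ t x, (t, x) ∈ S → u t x ≤ 0 := by
  have hε (ε : ℝ) (hε : 0 < ε) : ∀ t x, (t, x) ∈ S → u t x - ε * W t x ≤ 0 := by
    obtain ⟨K, hKS, hK, hWK⟩ := hW.proper (B / ε)
    refine _root_.nonpos_of_heatOp_neg hK hKS
      ((hu.sub (hW.continuousOn.const_mul ε)).mono hKS) ?_ ?_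
    · intro t x hS hout
      linarith [hB t x hS, (div_le_iff₀' hε).1 (hWK t x hS hout)]
    · intro t x hS hpos
      have hu_pos : 0 < u t x := by linarith [mul_nonneg hε.le (hW.nonneg t x hS)]
      obtain ⟨htime, hspace, c, hc, huc⟩ := hop t x hS hu_pos
      obtain ⟨b, hb, hWb⟩ := hW.heatOp_nonneg t x hS
      exact ⟨htime, hspace, c - ε * b, by linarith [mul_nonneg hε.le hb],
        huc.sub (hWb.const_mul ε)⟩
  intro t x hS
  have hlim : Tendsto (fun ε => u t x - ε * W t x) (𝓝[>] 0) (𝓝 (u t x - 0 * W t x)) :=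
    (Continuous.tendsto (by fun_prop) 0).mono_left nhdsWithin_le_nhds
  have hle : u t x - 0 * W t x ≤ 0 :=
    le_of_tendsto hlim (eventually_mem_nhdsWithin.mono fun ε h => hε ε h t x hS)
  simpa using hle

theorem nonpos_on_box {u : ℝ → ℝ → ℝ} {α τ x₁ x₂ B : ℝ} {F : Set (ℝ × ℝ)}
    (hW : IsHeatBarrier W ((Icc α τ ×ˢ Icc x₁ x₂) \ F)) (hF : ∀ p ∈ F, p.1 = α)
    (hu : ContinuousOn (Function.uncurry u) ((Icc α τ ×ˢ Icc x₁ x₂) \ F))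
    (hB : ∀ t ∈ Icc α τ, ∀ x ∈ Icc x₁ x₂, u t x ≤ B)
    (hbdry : ∀ t ∈ Icc α τ, ∀ x ∈ Icc x₁ x₂, t = α ∨ x = x₁ ∨ x = x₂ → u t x ≤ 0)
    (hop : ∀ t ∈ Ioc α τ, ∀ x ∈ Ioo x₁ x₂, ∃ c < 0, HasHeatOpAt u c t x) :
    ∀ t ∈ Icc α τ, ∀ x ∈ Icc x₁ x₂, u t x ≤ 0 := by
  intro t ht x hx
  by_cases hmem : (t, x) ∈ F
  · exact hbdry t ht x hx (.inl (hF _ hmem))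
  refine hW.nonpos_of_heatOp_neg hu (fun t x h => hB t h.1.1 x h.1.2) ?_ t x ⟨⟨ht, hx⟩, hmem⟩
  rintro t x ⟨⟨ht, hx⟩, -⟩ hpos
  simp only at ht hx
  have hinterior : ¬(t = α ∨ x = x₁ ∨ x = x₂) := fun h => hpos.not_ge (hbdry t ht x hx h)
  push Not at hinterior
  have hαt : α < t := lt_of_le_of_ne ht.1 hinterior.1.symm
  have hx₁ : x₁ < x := lt_of_le_of_ne hx.1 hinterior.2.1.symm
  have hx₂ : x < x₂ := lt_of_le_of_ne hx.2 hinterior.2.2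
  refine ⟨?_, ?_, hop t ⟨hαt, ht.2⟩ x ⟨hx₁, hx₂⟩⟩
  · filter_upwards [Ioo_mem_nhdsLT hαt] with s hs
    exact ⟨⟨⟨hs.1.le, hs.2.le.trans ht.2⟩, hx⟩, fun h => hs.1.ne' (hF _ h)⟩
  · filter_upwards [Icc_mem_nhds hx₁ hx₂] with y hy
    exact ⟨⟨ht, hy⟩, fun h => hαt.ne' (hF _ h)⟩

end IsHeatBarrier

theorem nonpos_on_box_of_heatOp_neg {u : ℝ → ℝ → ℝ} {α τ x₁ x₂ : ℝ}
    (hu : ContinuousOn (Function.uncurry u) (Icc α τ ×ˢ Icc x₁ x₂))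
    (hbdry : ∀ t ∈ Icc α τ, ∀ x ∈ Icc x₁ x₂, t = α ∨ x = x₁ ∨ x = x₂ → u t x ≤ 0)
    (hop : ∀ t ∈ Ioc α τ, ∀ x ∈ Ioo x₁ x₂, ∃ c < 0, HasHeatOpAt u c t x) :
    ∀ t ∈ Icc α τ, ∀ x ∈ Icc x₁ x₂, u t x ≤ 0 := by
  have hbox : IsCompact (Icc α τ ×ˢ Icc x₁ x₂) := isCompact_Icc.prod isCompact_Icc
  obtain ⟨B, hB⟩ := hbox.bddAbove_image hu
  refine (IsHeatBarrier.zero (hbox.diff isOpen_empty)).nonpos_on_box (by simp)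
    (hu.mono sdiff_subset) (fun t ht x hx => hB ⟨(t, x), ⟨ht, hx⟩, rfl⟩) hbdry hop

/-- A supersolution of the heat equation for `t ≥ 0` which blows up only at the origin. -/
def cornerBarrier (t x : ℝ) : ℝ := -log (x ^ 2 + 8 * t) + 32 * t / (x ^ 2 + 8 * t)

lemma neg_log_le_cornerBarrier {t : ℝ} (ht : 0 ≤ t) (x : ℝ) :
    -log (x ^ 2 + 8 * t) ≤ cornerBarrier t x :=
  le_add_of_nonneg_right (by positivity)

lemma hasHeatOpAt_cornerBarrier {t x : ℝ} (hρ : 0 < x ^ 2 + 8 * t) :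
    HasHeatOpAt cornerBarrier
      ((2 * (x ^ 2 + 8 * t) ^ 2 - 12 * x ^ 2 * (x ^ 2 + 8 * t) + 32 * x ^ 4) /
        (x ^ 2 + 8 * t) ^ 3) t x := by
  have hρ' := hρ.ne'
  have hspace (y : ℝ) : HasDerivAt (fun y : ℝ => y ^ 2 + 8 * t) (2 * y) y := by
    simpa using (hasDerivAt_pow 2 y).add_const (8 * t)
  have htime : HasDerivAt (fun s : ℝ => x ^ 2 + 8 * s) 8 t := by
    simpa using ((hasDerivAt_id t).const_mul 8).const_add (x ^ 2)
  have hlin (k y : ℝ) : HasDerivAt (fun y : ℝ => k * y) k y := by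
    simpa using (hasDerivAt_id y).const_mul k
  refine ⟨fun y => -(2 * y / (y ^ 2 + 8 * t)) + -(64 * t * y) / (y ^ 2 + 8 * t) ^ 2,
    _, _, ?_, ((hlin 2 x).fun_div (hspace x) hρ').fun_neg.fun_add
      ((hlin (64 * t) x).fun_neg.fun_div ((hspace x).fun_pow 2) (by positivity)),
    (htime.log hρ').fun_neg.fun_add ((hlin 32 t).fun_div htime hρ'), ?_⟩
  · filter_upwards [(hspace x).continuousAt.eventually (lt_mem_nhds hρ)] with y hy
    refine (((hspace y).log hy.ne').fun_neg.fun_add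
      ((hasDerivAt_const y (32 * t)).fun_div (hspace y) hy.ne')).congr_deriv ?_
    congr 2
    ring
  · field_simp
    ring

lemma exists_isHeatBarrier_diff_singleton {S : Set (ℝ × ℝ)} {α : ℝ} (hS : IsCompact S)
    (hα : ∀ p ∈ S, α ≤ p.1) (ξ : ℝ) : ∃ W, IsHeatBarrier W (S \ {(α, ξ)}) := by
  set ρ : ℝ × ℝ → ℝ := fun p => (p.2 - ξ) ^ 2 + 8 * (p.1 - α)
  have hρ : Continuous ρ := by fun_prop
  have hρ_pos (p : ℝ × ℝ) (hp : p ∈ S \ {(α, ξ)}) : 0 < ρ p := by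
    rcases (hα p hp.1).eq_or_lt with h | h
    · have hne : p.2 - ξ ≠ 0 := sub_ne_zero.2 fun h' => hp.2 (Prod.ext h.symm h')
      linarith [sq_pos_of_ne_zero hne]
    · nlinarith [sq_nonneg (p.2 - ξ)]
  obtain ⟨D, hD⟩ := hS.bddAbove_image hρ.continuousOn
  have hlow (t x : ℝ) (h : (t, x) ∈ S) : -log (ρ (t, x)) ≤ cornerBarrier (t - α) (x - ξ) :=
    neg_log_le_cornerBarrier (sub_nonneg.2 (hα _ h)) _
  refine ⟨fun t x => cornerBarrier (t - α) (x - ξ) + log D, ?_, ?_, ?_, ?_⟩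
  · intro p hp
    have hne : (p.2 - ξ) ^ 2 + 8 * (p.1 - α) ≠ 0 := (hρ_pos p hp).ne'
    apply ContinuousAt.continuousWithinAt
    simp only [Function.uncurry_def, cornerBarrier]
    fun_prop (disch := exact hne)
  · intro t x h
    linarith [hlow t x h.1, log_le_log (hρ_pos _ h) (hD ⟨(t, x), h.1, rfl⟩)]
  · intro t x h
    refine ⟨_, ?_, ((hasHeatOpAt_cornerBarrier (hρ_pos _ h)).comp_sub).add
      (HasHeatOpAt.of_time (hasDerivAt_const t _) x)⟩
    rw [add_zero]
    refine div_nonneg ?_ (pow_pos (hρ_pos _ h) 3).le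
    nlinarith [sq_nonneg (ρ (t, x) - 3 * (x - ξ) ^ 2), sq_nonneg ((x - ξ) ^ 2)]
  · intro A
    refine ⟨S ∩ {p | exp (log D - A) ≤ ρ p}, fun p hp => ⟨hp.1, ?_⟩,
      hS.inter_right (isClosed_le continuous_const hρ), fun t x h hout => ?_⟩
    · rintro rfl
      have := hp.2.trans_lt' (exp_pos _)
      simp [ρ] at this
    · have hlt : ρ (t, x) < exp (log D - A) := not_le.1 fun h' => hout ⟨h.1, h'⟩
      linarith [hlow t x h.1, (log_lt_iff_lt_exp (hρ_pos _ h)).2 hlt]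

theorem le_of_heatOp_lt_off_corners {u : ℝ → ℝ → ℝ} {α τ x₁ x₂ M K B : ℝ} (hK : 0 ≤ K)
    (hu : ContinuousOn (Function.uncurry u) ((Icc α τ ×ˢ Icc x₁ x₂) \ {(α, x₁), (α, x₂)}))
    (hB : ∀ t ∈ Icc α τ, ∀ x ∈ Icc x₁ x₂, u t x ≤ B)
    (hbdry : ∀ t ∈ Icc α τ, ∀ x ∈ Icc x₁ x₂, t = α ∨ x = x₁ ∨ x = x₂ → u t x ≤ M)
    (hop : ∀ t ∈ Ioc α τ, ∀ x ∈ Ioo x₁ x₂, ∃ c < K, HasHeatOpAt u c t x) :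
    ∀ t ∈ Icc α τ, ∀ x ∈ Icc x₁ x₂, u t x ≤ M + K * (t - α) := by
  have hbox : IsCompact (Icc α τ ×ˢ Icc x₁ x₂) := isCompact_Icc.prod isCompact_Icc
  obtain ⟨W₁, hW₁⟩ := exists_isHeatBarrier_diff_singleton (α := α) hbox (fun p hp => hp.1.1) x₁
  obtain ⟨W₂, hW₂⟩ := exists_isHeatBarrier_diff_singleton (α := α) hbox (fun p hp => hp.1.1) x₂
  have hW := hW₁.add hW₂
  rw [sdiff_inter_sdiff, singleton_union] at hW
  have hdrift (t : ℝ) (ht : t ∈ Icc α τ) : 0 ≤ K * (t - α) := mul_nonneg hK (sub_nonneg.2 ht.1)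
  intro t ht x hx
  refine sub_nonpos.1 (hW.nonpos_on_box (u := fun t x => u t x - (M + K * (t - α)))
    (B := B - M) (by simp) (hu.sub (by fun_prop)) ?_ ?_ ?_ t ht x hx)
  · intro t ht x hx
    linarith [hB t ht x hx, hdrift t ht]
  · intro t ht x hx hbd
    linarith [hbdry t ht x hx hbd, hdrift t ht]
  · intro t ht x hx
    obtain ⟨c, hc, huc⟩ := hop t ht x hx
    have hlin : HasDerivAt (fun s => M + K * (s - α)) K t := by
      simpa using (((hasDerivAt_id t).sub_const α).const_mul K).const_add M
    exact ⟨c - K, sub_neg.2 hc, huc.sub (.of_time hlin x)⟩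

lemma exists_gap_of_isClosed {Z : Set ℝ} {a b x : ℝ} (hZ : IsClosed Z) (ha : a ∈ Z) (hb : b ∈ Z)
    (hx : x ∈ Icc a b) :
    ∃ y₁ ∈ Z ∩ Icc a x, ∃ y₂ ∈ Z ∩ Icc x b, Disjoint (Ioo y₁ y₂) Z := by
  obtain ⟨y₁, ⟨hy₁, hay₁, hy₁x⟩, hgreatest⟩ :=
    (isCompact_Icc.inter_left hZ).exists_isGreatest ⟨a, ha, le_rfl, hx.1⟩
  obtain ⟨y₂, ⟨hy₂, hxy₂, hy₂b⟩, hleast⟩ :=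
    (isCompact_Icc.inter_left hZ).exists_isLeast ⟨b, hb, hx.2, le_rfl⟩
  refine ⟨y₁, ⟨hy₁, hay₁, hy₁x⟩, y₂, ⟨hy₂, hxy₂, hy₂b⟩, disjoint_left.2 fun y hy hyZ => ?_⟩
  rcases le_total y x with h | h
  · exact hy.1.not_ge (hgreatest ⟨hyZ, hay₁.trans hy.1.le, h⟩)
  · exact hy.2.not_ge (hleast ⟨hyZ, h, hy.2.le.trans hy₂b⟩)

/-- Each gap of the discontinuity set `{α} × Z` spans a box with at most two bad corners. -/
theorem le_of_heatOp_lt_off_bottom {u : ℝ → ℝ → ℝ} {α τ x₁ x₂ M K B : ℝ} {Z : Set ℝ}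
    (hK : 0 ≤ K) (hZ : IsClosed Z)
    (hu : ContinuousOn (Function.uncurry u) ((Icc α τ ×ˢ Icc x₁ x₂) \ ({α} ×ˢ Z)))
    (hB : ∀ t ∈ Icc α τ, ∀ x ∈ Icc x₁ x₂, u t x ≤ B)
    (hbdry : ∀ t ∈ Icc α τ, ∀ x ∈ Icc x₁ x₂, t = α ∨ x = x₁ ∨ x = x₂ ∨ x ∈ Z → u t x ≤ M)
    (hop : ∀ t ∈ Ioc α τ, ∀ x ∈ Ioo x₁ x₂, ∃ c < K, HasHeatOpAt u c t x) :
    ∀ t ∈ Icc α τ, ∀ x ∈ Icc x₁ x₂, u t x ≤ M + K * (t - α) := by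
  intro t ht x hx
  obtain ⟨y₁, ⟨hy₁, hy₁x⟩, y₂, ⟨hy₂, hy₂x⟩, hgap⟩ := exists_gap_of_isClosed
    ((toFinite {x₁, x₂}).isClosed.union hZ) (.inl (by simp)) (.inl (by simp)) hx
  have hsub : Icc y₁ y₂ ⊆ Icc x₁ x₂ := Icc_subset_Icc hy₁x.1 hy₂x.2
  have hside (y : ℝ) (hy : y ∈ ({x₁, x₂} ∪ Z : Set ℝ)) : y = x₁ ∨ y = x₂ ∨ y ∈ Z := by
    simpa [or_assoc] using hy
  refine le_of_heatOp_lt_off_corners (x₁ := y₁) (x₂ := y₂) hK (hu.mono ?_)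
    (fun t ht x hx => hB t ht x (hsub hx)) ?_
    (fun t ht x hx => hop t ht x (Ioo_subset_Ioo hy₁x.1 hy₂x.2 hx)) t ht x ⟨hy₁x.2, hy₂x.1⟩
  · rintro ⟨s, y⟩ ⟨⟨hs, hy⟩, hcorner⟩
    refine ⟨⟨hs, hsub hy⟩, fun ⟨hsα, hyZ⟩ => ?_⟩
    obtain rfl : s = α := hsα
    have hy' : y ∉ Ioo y₁ y₂ := fun h => disjoint_left.1 hgap h (.inr hyZ)
    have hends : y = y₁ ∨ y = y₂ := by
      by_contra! h
      exact hy' ⟨hy.1.lt_of_ne' h.1, hy.2.lt_of_ne h.2⟩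
    exact hcorner (hends.imp (by rintro rfl; rfl) (by rintro rfl; rfl))
  · rintro s hs y hy (h | rfl | rfl)
    · exact hbdry s hs y (hsub hy) (.inl h)
    · exact hbdry s hs _ (hsub hy) (.inr (hside _ hy₁))
    · exact hbdry s hs _ (hsub hy) (.inr (hside _ hy₂))

lemma HasHeatOpAt.sub_reflect_sub_parabola {u : ℝ → ℝ → ℝ} {a b c t y : ℝ} (s r M : ℝ)
    (hplus : HasHeatOpAt u b t (a + y)) (hminus : HasHeatOpAt u c t (a - y)) :
    HasHeatOpAt (fun t y => (t - s) * (u t (a + y) - u t (a - y)) - M * y * (2 * r - y))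
      (u t (a + y) - u t (a - y) + (t - s) * (b - c) - 2 * M) t y := by
  have hshift : HasHeatOpAt (fun t y => u t (a + y)) b t y := by
    simpa [add_comm] using HasHeatOpAt.comp_affine (k := 1) (r := 0) (b := a)
      (by simpa [add_comm] using hplus)
  have hreflect : HasHeatOpAt (fun t y => u t (a - y)) c t y := by
    simpa [neg_add_eq_sub] using HasHeatOpAt.comp_affine (k := -1) (r := 0) (b := a)
      (by simpa [neg_add_eq_sub] using hminus)
  have hparabola (z : ℝ) :
      HasDerivAt (fun z => M * z * (2 * r - z)) (2 * M * r - 2 * M * z) z := by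
    refine (((hasDerivAt_id z).const_mul M).fun_mul
      ((hasDerivAt_id z).const_sub (2 * r))).congr_deriv ?_
    simp only [id]
    ring
  have hparabola' : HasDerivAt (fun z => 2 * M * r - 2 * M * z) (-(2 * M)) y := by
    simpa using ((hasDerivAt_id y).const_mul (2 * M)).const_sub (2 * M * r)
  refine (((hshift.sub hreflect).time_mul ((hasDerivAt_id t).sub_const s)).sub
    (.of_space hparabola hparabola' t)).congr_value ?_
  simp only [id]
  ring

/-! ### Interior estimates -/

/-- Quantitative control of `u` on `S`: one constant `K` bounds `u` and, strictly, its heat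
operator. The interior estimates are not sharp, so they do not need two constants. -/
def HeatBoundedOn (K : ℝ) (u : ℝ → ℝ → ℝ) (S : Set (ℝ × ℝ)) : Prop :=
  ∀ t x, (t, x) ∈ S → |u t x| ≤ K ∧ ∃ c, |c| < K ∧ HasHeatOpAt u c t x

namespace HeatBoundedOn

variable {K : ℝ} {u : ℝ → ℝ → ℝ} {S T : Set (ℝ × ℝ)}

lemma mono (hu : HeatBoundedOn K u S) (hTS : T ⊆ S) : HeatBoundedOn K u T :=
  fun t x h => hu t x (hTS h)

lemma neg (hu : HeatBoundedOn K u S) : HeatBoundedOn K (fun t x => -u t x) S := by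
  intro t x h
  obtain ⟨hK, c, hc, huc⟩ := hu t x h
  exact ⟨by rwa [abs_neg], -c, by rwa [abs_neg], huc.neg⟩

lemma nonneg (hu : HeatBoundedOn K u S) (hS : S.Nonempty) : 0 ≤ K :=
  let ⟨_, hp⟩ := hS
  (abs_nonneg _).trans (hu _ _ hp).1

/-- The difference of `u` and its reflection in `x = a` vanishes on the axis, and its product with
`t - s` also vanishes at the initial time, so the product stays below `M y (2 r - y)`. -/
lemma mul_sub_reflect_le {s τ a r M : ℝ} (hs : s ≤ τ)
    (hbd : HeatBoundedOn K u (Icc s τ ×ˢ Icc (a - r) (a + r)))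
    (hu : ContinuousOn (Function.uncurry u) (Icc s τ ×ˢ Icc (a - r) (a + r)))
    (hM : K * (τ - s) + K ≤ M) (hMr : 2 * K * (τ - s) ≤ M * r ^ 2) :
    ∀ y ∈ Icc 0 r, (τ - s) * (u τ (a + y) - u τ (a - y)) ≤ M * y * (2 * r - y) := by
  intro y₀ hy₀
  have hplus (y : ℝ) (hy : y ∈ Icc 0 r) : a + y ∈ Icc (a - r) (a + r) := by
    constructor <;> linarith [hy.1, hy.2]
  have hminus (y : ℝ) (hy : y ∈ Icc 0 r) : a - y ∈ Icc (a - r) (a + r) := by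
    constructor <;> linarith [hy.1, hy.2]
  have hK : 0 ≤ K := hbd.nonneg ⟨(s, a + y₀), left_mem_Icc.2 hs, hplus y₀ hy₀⟩
  have hM0 : 0 ≤ M := by nlinarith
  have hdiff (t : ℝ) (ht : t ∈ Icc s τ) (y : ℝ) (hy : y ∈ Icc 0 r) :
      u t (a + y) - u t (a - y) ≤ 2 * K := by
    linarith [(abs_le.1 (hbd t _ ⟨ht, hplus y hy⟩).1).2,
      (abs_le.1 (hbd t _ ⟨ht, hminus y hy⟩).1).1]
  refine sub_nonpos.1 (nonpos_on_box_of_heatOp_neg (α := s)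
    (u := fun t y => (t - s) * (u t (a + y) - u t (a - y)) - M * y * (2 * r - y))
    ?_ ?_ ?_ τ (right_mem_Icc.2 hs) y₀ hy₀)
  · refine ContinuousOn.sub (.mul (by fun_prop) (.sub ?_ ?_)) (by fun_prop)
    · exact hu.comp (f := fun p : ℝ × ℝ => (p.1, a + p.2)) (by fun_prop)
        fun p hp => ⟨hp.1, hplus _ hp.2⟩
    · exact hu.comp (f := fun p : ℝ × ℝ => (p.1, a - p.2)) (by fun_prop)
        fun p hp => ⟨hp.1, hminus _ hp.2⟩
  · rintro t ht y hy (rfl | rfl | rfl)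
    · nlinarith [mul_nonneg (mul_nonneg hM0 hy.1) (by linarith [hy.1, hy.2] : 0 ≤ 2 * r - y)]
    · simp
    · nlinarith [mul_le_mul_of_nonneg_left (hdiff t ht y hy) (sub_nonneg.2 ht.1),
        mul_le_mul_of_nonneg_right ht.2 hK]
  · intro t ht y hy
    have hy' := Ioo_subset_Icc_self hy
    have ht' := Ioc_subset_Icc_self ht
    obtain ⟨-, c₁, hc₁, h₁⟩ := hbd t _ ⟨ht', hplus y hy'⟩
    obtain ⟨-, c₂, hc₂, h₂⟩ := hbd t _ ⟨ht', hminus y hy'⟩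
    refine ⟨_, ?_, h₁.sub_reflect_sub_parabola s r M h₂⟩
    have hc : c₁ - c₂ < 2 * K := by linarith [(abs_lt.1 hc₁).2, (abs_lt.1 hc₂).1]
    nlinarith [hdiff t ht' y hy', mul_lt_mul_of_pos_left hc (sub_pos.2 ht.1),
      mul_le_mul_of_nonneg_right ht.2 hK]

theorem mul_abs_sub_le {s τ x₀ r M : ℝ} (hs : s ≤ τ)
    (hbd : HeatBoundedOn K u (Icc s τ ×ˢ Icc (x₀ - 2 * r) (x₀ + 2 * r)))
    (hu : ContinuousOn (Function.uncurry u) (Icc s τ ×ˢ Icc (x₀ - 2 * r) (x₀ + 2 * r)))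
    (hM : K * (τ - s) + K ≤ M) (hMr : 2 * K * (τ - s) ≤ M * r ^ 2) {x : ℝ}
    (hx : |x - x₀| ≤ 2 * r) : (τ - s) * |u τ x - u τ x₀| ≤ M * r * |x - x₀| := by
  set m := (x + x₀) / 2 with hm
  set h := |x - x₀| / 2 with hh
  have hh_mem : h ∈ Icc 0 r := ⟨by positivity, by linarith⟩
  have hsub : Icc s τ ×ˢ Icc (m - r) (m + r) ⊆ Icc s τ ×ˢ Icc (x₀ - 2 * r) (x₀ + 2 * r) := by
    refine prod_mono Subset.rfl (Icc_subset_Icc ?_ ?_) <;> linarith [abs_le.1 hx]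
  have hle := mul_sub_reflect_le hs (hbd.mono hsub) (hu.mono hsub) hM hMr h hh_mem
  have hge := mul_sub_reflect_le hs (hbd.mono hsub).neg (hu.mono hsub).neg hM hMr h hh_mem
  have habs : |u τ (m + h) - u τ (m - h)| = |u τ x - u τ x₀| := by
    rcases abs_cases (x - x₀) with ⟨habs, -⟩ | ⟨habs, -⟩ <;> rw [hh, habs, hm]
    · ring_nf
    · rw [abs_sub_comm]
      ring_nf
  have hM0 : 0 ≤ M := by
    have hK : 0 ≤ K :=
      hbd.nonneg ⟨(s, x₀), left_mem_Icc.2 hs, by constructor <;> linarith [hh_mem.1, hh_mem.2]⟩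
    nlinarith
  calc (τ - s) * |u τ x - u τ x₀|
      = |(τ - s) * (u τ (m + h) - u τ (m - h))| := by
        rw [abs_mul, abs_of_nonneg (sub_nonneg.2 hs), habs]
    _ ≤ M * h * (2 * r - h) := abs_le'.2 ⟨hle, by linarith⟩
    _ ≤ M * h * (2 * r) := by
        have := mul_nonneg hM0 hh_mem.1
        gcongr
        linarith [hh_mem.1]
    _ = M * r * |x - x₀| := by ring

lemma abs_deriv_le {t x : ℝ}
    (hbd : HeatBoundedOn K u (Icc (t - 1) t ×ˢ Icc (x - 1) (x + 1)))
    (hu : ContinuousOn (Function.uncurry u) (Icc (t - 1) t ×ˢ Icc (x - 1) (x + 1))) :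
    |deriv (u t) x| ≤ 4 * K := by
  have hK : 0 ≤ K :=
    hbd.nonneg ⟨(t, x), ⟨by simp, le_rfl⟩, by constructor <;> linarith⟩
  refine norm_deriv_le_of_lip' (f := u t) (by positivity) ?_
  filter_upwards [Icc_mem_nhds (sub_one_lt x) (lt_add_one x)] with y hy
  have hy' : |y - x| ≤ 2 * (1 / 2) := by
    rw [abs_le]
    constructor <;> linarith [hy.1, hy.2]
  have := mul_abs_sub_le (r := 1 / 2) (M := 8 * K) (sub_one_lt t).le (by simpa using hbd)
    (by simpa using hu) (by linarith) (by linarith) hy'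
  rw [norm_eq_abs, norm_eq_abs]
  linarith

lemma abs_sub_le_off_bottom {α τ x₁ x₂ η c : ℝ} {Z : Set ℝ}
    (hbd : HeatBoundedOn K u (Icc α τ ×ˢ Icc x₁ x₂)) (hZ : IsClosed Z)
    (hu : ContinuousOn (Function.uncurry u) ((Icc α τ ×ˢ Icc x₁ x₂) \ ({α} ×ˢ Z)))
    (hbdry : ∀ t ∈ Icc α τ, ∀ x ∈ Icc x₁ x₂, t = α ∨ x = x₁ ∨ x = x₂ ∨ x ∈ Z → |u t x - c| ≤ η) :
    ∀ t ∈ Icc α τ, ∀ x ∈ Icc x₁ x₂, |u t x - c| ≤ η + K * (t - α) := by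
  intro t ht x hx
  have hK : 0 ≤ K := hbd.nonneg ⟨(t, x), ht, hx⟩
  have hupper {v : ℝ → ℝ → ℝ} {b : ℝ} (hbd : HeatBoundedOn K v (Icc α τ ×ˢ Icc x₁ x₂))
      (hv : ContinuousOn (Function.uncurry v) ((Icc α τ ×ˢ Icc x₁ x₂) \ ({α} ×ˢ Z)))
      (hbdry : ∀ t ∈ Icc α τ, ∀ x ∈ Icc x₁ x₂,
        t = α ∨ x = x₁ ∨ x = x₂ ∨ x ∈ Z → v t x ≤ b + η) :
      v t x ≤ b + η + K * (t - α) := by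
    refine le_of_heatOp_lt_off_bottom hK hZ hv
      (fun t ht x hx => (abs_le.1 (hbd t x ⟨ht, hx⟩).1).2) hbdry ?_ t ht x hx
    intro t ht x hx
    obtain ⟨-, c, hc, hvc⟩ := hbd t x ⟨Ioc_subset_Icc_self ht, Ioo_subset_Icc_self hx⟩
    exact ⟨c, (abs_lt.1 hc).2, hvc⟩
  have hle := hupper (b := c) hbd hu fun t ht x hx h => by linarith [abs_le.1 (hbdry t ht x hx h)]
  have hge := hupper (b := -c) hbd.neg hu.neg fun t ht x hx h => by
    linarith [abs_le.1 (hbdry t ht x hx h)]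
  rw [abs_le]
  constructor <;> linarith

end HeatBoundedOn

/-! ### Joint continuity from separate differentiability -/

/-- `N` is a Lipschitz constant of `u` on the parts within `S` of the horizontal and vertical lines
through every point of `Q`; the base point of each estimate lies in `Q`. -/
def AxisLipschitzOn (N : ℝ) (u : ℝ → ℝ → ℝ) (Q S : Set (ℝ × ℝ)) : Prop :=
  ∀ t x, (t, x) ∈ Q → (∀ s, (s, x) ∈ S → |u s x - u t x| ≤ N * |s - t|) ∧
    ∀ y, (t, y) ∈ S → |u t y - u t x| ≤ N * |y - x|

/-- The slice of the last bad time before `t` serves as the bottom of a box without other bad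
times. -/
lemma HeatBoundedOn.abs_sub_le_after_bad {u : ℝ → ℝ → ℝ} {P : Set (ℝ × ℝ)}
    {a b x₁ x₂ s y η K c : ℝ} (hP : IsClosed P)
    (hbd : HeatBoundedOn K u (Icc a b ×ˢ Icc x₁ x₂))
    (hu : ∀ p ∈ Icc a b ×ˢ Icc x₁ x₂, p ∉ P → ContinuousAt (Function.uncurry u) p)
    (hside : ∀ t ∈ Icc a b, |u t x₁ - c| ≤ η ∧ |u t x₂ - c| ≤ η)
    (hcross : ∀ α y, (α, y) ∈ P ∩ Icc a b ×ˢ Icc x₁ x₂ → ∀ t x, (t, x) ∈ Icc a b ×ˢ Icc x₁ x₂ →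
      t = α ∨ x = y → |u t x - c| ≤ η)
    (hbad : (s, y) ∈ P ∩ Icc a b ×ˢ Icc x₁ x₂) :
    ∀ t ∈ Icc s b, ∀ x ∈ Icc x₁ x₂, |u t x - c| ≤ η + K * (b - a) := by
  intro t ht x hx
  have hK : 0 ≤ K := hbd.nonneg ⟨_, hbad.2⟩
  have hcompact : IsCompact (Prod.fst '' (P ∩ Icc s t ×ˢ Icc x₁ x₂)) :=
    ((isCompact_Icc.prod isCompact_Icc).inter_left hP).image continuous_fst
  obtain ⟨_, ⟨⟨α, y'⟩, ⟨hαP, hα, hy'⟩, rfl⟩, hlast⟩ := hcompact.exists_isGreatest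
    ⟨s, (s, y), ⟨hbad.1, ⟨le_rfl, ht.1⟩, hbad.2.2⟩, rfl⟩
  simp only at hα hy' hlast
  have hsub : Icc α t ⊆ Icc a b := Icc_subset_Icc (hbad.2.1.1.trans hα.1) ht.2
  have hbox : Icc α t ×ˢ Icc x₁ x₂ ⊆ Icc a b ×ˢ Icc x₁ x₂ := prod_mono hsub Subset.rfl
  have hα_mem : α ∈ Icc a b := hsub (left_mem_Icc.2 hα.2)
  have hle := (hbd.mono hbox).abs_sub_le_off_bottom (η := η) (c := c) (Z := {y | (α, y) ∈ P})
    (hP.preimage (Continuous.prodMk_right α)) ?_ ?_ t ⟨hα.2, le_rfl⟩ x hx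
  · refine hle.trans ?_
    gcongr
    · exact ht.2
    · exact hα_mem.1
  · rintro ⟨r, z⟩ ⟨⟨hr, hz⟩, hbottom⟩
    refine (hu _ (hbox ⟨hr, hz⟩) fun hrP => hbottom ?_).continuousWithinAt
    obtain rfl : r = α :=
      le_antisymm (hlast ⟨(r, z), ⟨hrP, ⟨hα.1.trans hr.1, hr.2⟩, hz⟩, rfl⟩) hr.1
    exact ⟨rfl, hrP⟩
  · rintro r hr z hz (h | rfl | rfl | h)
    · exact hcross α y' ⟨hαP, hα_mem, hy'⟩ r z ⟨hsub hr, hz⟩ (.inl h)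
    · exact (hside r (hsub hr)).1
    · exact (hside r (hsub hr)).2
    · exact hcross α z ⟨h, hα_mem, hz⟩ r z ⟨hsub hr, hz⟩ (.inr rfl)

lemma HeatBoundedOn.exists_abs_sub_le_mul {u : ℝ → ℝ → ℝ} {a t₀ x₀ r K : ℝ} (ha : a < t₀)
    (hr : 0 < r) (hbd : HeatBoundedOn K u (Ico a t₀ ×ˢ Icc (x₀ - 2 * r) (x₀ + 2 * r)))
    (hu : ContinuousOn (Function.uncurry u) (Ico a t₀ ×ˢ Icc (x₀ - 2 * r) (x₀ + 2 * r))) :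
    ∃ L, ∀ t ∈ Ioo ((a + t₀) / 2) t₀, ∀ x, |x - x₀| ≤ 2 * r →
      |u t x - u t x₀| ≤ L * |x - x₀| := by
  have hK : 0 ≤ K :=
    hbd.nonneg ⟨(a, x₀), left_mem_Ico.2 ha, by constructor <;> linarith⟩
  have := sub_pos.2 ha
  set M := K * (t₀ - a) + K + 2 * K * (t₀ - a) / r ^ 2 with hM
  have hMK : K * (t₀ - a) + K ≤ M := le_add_of_nonneg_right (by positivity)
  have hMr : 2 * K * (t₀ - a) ≤ M * r ^ 2 := by
    rw [hM, add_mul, div_mul_cancel₀ _ (by positivity)]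
    exact le_add_of_nonneg_left (by positivity)
  refine ⟨M * r / ((t₀ - a) / 2), fun t ht x hx => ?_⟩
  have hsub : Icc a t ×ˢ Icc (x₀ - 2 * r) (x₀ + 2 * r) ⊆
      Ico a t₀ ×ˢ Icc (x₀ - 2 * r) (x₀ + 2 * r) :=
    prod_mono (Icc_subset_Ico_right ht.2) Subset.rfl
  rw [div_mul_eq_mul_div, le_div_iff₀' (by linarith)]
  calc (t₀ - a) / 2 * |u t x - u t x₀| ≤ (t - a) * |u t x - u t x₀| := by
        gcongr
        linarith [ht.1]
    _ ≤ M * r * |x - x₀| :=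
        HeatBoundedOn.mul_abs_sub_le (by linarith [ht.1]) (hbd.mono hsub) (hu.mono hsub)
          (by nlinarith [ht.2]) (by nlinarith [ht.2]) hx

/-- The interior Lipschitz estimate is uniform up to the final time. -/
lemma HeatBoundedOn.continuousWithinAt_past {u : ℝ → ℝ → ℝ} {a t₀ x₀ r K : ℝ} (ha : a < t₀)
    (hr : 0 < r) (hbd : HeatBoundedOn K u (Ico a t₀ ×ˢ Icc (x₀ - 2 * r) (x₀ + 2 * r)))
    (hu : ContinuousOn (Function.uncurry u) (Ico a t₀ ×ˢ Icc (x₀ - 2 * r) (x₀ + 2 * r)))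
    (htime : ContinuousAt (fun s => u s x₀) t₀) :
    ContinuousWithinAt (Function.uncurry u) (Iio t₀ ×ˢ univ) (t₀, x₀) := by
  obtain ⟨L, hL⟩ := hbd.exists_abs_sub_le_mul ha hr hu
  have hlip : ∀ᶠ p in 𝓝[Iio t₀ ×ˢ univ] (t₀, x₀), |u p.1 p.2 - u p.1 x₀| ≤ L * |p.2 - x₀| := by
    have hlate : ∀ᶠ p : ℝ × ℝ in 𝓝 (t₀, x₀), (a + t₀) / 2 < p.1 :=
      continuousAt_fst.eventually (lt_mem_nhds (by linarith))
    have hnear : ∀ᶠ p : ℝ × ℝ in 𝓝 (t₀, x₀), |p.2 - x₀| < 2 * r :=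
      (by fun_prop : Continuous fun p : ℝ × ℝ => |p.2 - x₀|).continuousAt.eventually
        (gt_mem_nhds (by simpa using hr))
    filter_upwards [self_mem_nhdsWithin, hlate.filter_mono nhdsWithin_le_nhds,
      hnear.filter_mono nhdsWithin_le_nhds] with p hp hpa hpx
    exact hL p.1 ⟨hpa, hp.1⟩ p.2 hpx.le
  have hspace : Tendsto (fun p : ℝ × ℝ => L * |p.2 - x₀|) (𝓝[Iio t₀ ×ˢ univ] (t₀, x₀)) (𝓝 0) := by
    simpa using ((by fun_prop : Continuous fun p : ℝ × ℝ => L * |p.2 - x₀|).tendsto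
      (t₀, x₀)).mono_left nhdsWithin_le_nhds
  have htime' : Tendsto (fun p : ℝ × ℝ => u p.1 x₀) (𝓝[Iio t₀ ×ˢ univ] (t₀, x₀)) (𝓝 (u t₀ x₀)) :=
    (htime.tendsto.comp (continuousAt_fst (p := (t₀, x₀)))).mono_left nhdsWithin_le_nhds
  simpa [ContinuousWithinAt, Function.uncurry_def] using (squeeze_zero_norm' hlip hspace).add htime'

lemma exists_box_abs_sub_le {u : ℝ → ℝ → ℝ} {t₀ x₀ ρ ε : ℝ} (hρ : 0 < ρ) (hε : 0 < ε)
    (hspace : ContinuousAt (u t₀) x₀)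
    (htime : ∀ x, |x - x₀| < ρ → ContinuousAt (fun s => u s x) t₀) :
    ∃ r ∈ Ioo 0 ρ, ∃ δ ∈ Ioo 0 ρ, (∀ x ∈ Icc (x₀ - r) (x₀ + r), |u t₀ x - u t₀ x₀| ≤ ε) ∧
      ∀ t ∈ Icc (t₀ - δ) (t₀ + δ),
        |u t (x₀ - r) - u t₀ x₀| ≤ 2 * ε ∧ |u t (x₀ + r) - u t₀ x₀| ≤ 2 * ε := by
  obtain ⟨r', hr', hslice⟩ := Metric.continuousAt_iff.1 hspace ε hε
  obtain ⟨r, hr, hr_lt⟩ := exists_between (lt_min hr' hρ)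
  have hslice' (x : ℝ) (hx : x ∈ Icc (x₀ - r) (x₀ + r)) : |u t₀ x - u t₀ x₀| ≤ ε := by
    refine (hslice ?_).le
    rw [dist_eq, abs_lt]
    constructor <;> linarith [hx.1, hx.2, lt_min_iff.1 hr_lt]
  have hside (x : ℝ) (hx : x ∈ Icc (x₀ - r) (x₀ + r)) :
      ∀ᶠ t in 𝓝 t₀, |u t x - u t₀ x₀| < 2 * ε := by
    have hx' : |x - x₀| < ρ := by
      rw [abs_lt]
      constructor <;> linarith [hx.1, hx.2, lt_min_iff.1 hr_lt]
    refine ((htime x hx').sub_const (u t₀ x₀)).abs.eventually (gt_mem_nhds ?_)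
    linarith [hslice' x hx]
  obtain ⟨δ', hδ', hsides⟩ := Metric.eventually_nhds_iff.1
    ((hside _ (left_mem_Icc.2 (by linarith))).and (hside _ (right_mem_Icc.2 (by linarith))))
  obtain ⟨δ, hδ, hδ_lt⟩ := exists_between (lt_min hδ' hρ)
  refine ⟨r, ⟨hr, (lt_min_iff.1 hr_lt).2⟩, δ, ⟨hδ, (lt_min_iff.1 hδ_lt).2⟩, hslice', ?_⟩
  intro t ht
  refine (hsides ?_).imp le_of_lt le_of_lt
  rw [dist_eq, abs_lt]
  constructor <;> linarith [ht.1, ht.2, lt_min_iff.1 hδ_lt]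

lemma AxisLipschitzOn.abs_sub_le_of_cross {u : ℝ → ℝ → ℝ} {Q S : Set (ℝ × ℝ)}
    {N t₀ x₀ r δ ε c α y t x : ℝ} (hN : 0 ≤ N) (hlip : AxisLipschitzOn N u Q S)
    (hS : Icc (t₀ - δ) (t₀ + δ) ×ˢ Icc (x₀ - r) (x₀ + r) ⊆ S)
    (hslice : ∀ x ∈ Icc (x₀ - r) (x₀ + r), |u t₀ x - c| ≤ ε)
    (hy : (α, y) ∈ Q ∩ Icc (t₀ - δ) (t₀ + δ) ×ˢ Icc (x₀ - r) (x₀ + r))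
    (hx : (t, x) ∈ Icc (t₀ - δ) (t₀ + δ) ×ˢ Icc (x₀ - r) (x₀ + r)) (hcross : t = α ∨ x = y) :
    |u t x - c| ≤ ε + N * (2 * r + 3 * δ) := by
  obtain ⟨hyQ, hα, hy⟩ := hy
  obtain ⟨htime, hspace⟩ := hlip α y hyQ
  obtain ⟨ht, hx'⟩ := hx
  simp only at hα hy ht hx'
  have hδ : 0 ≤ δ := by linarith [ht.1, ht.2]
  have hr : 0 ≤ r := by linarith [hy.1, hy.2]
  have hbase : |u t₀ y - u α y| ≤ N * δ := by
    refine (htime t₀ (hS ⟨⟨by linarith, by linarith⟩, hy⟩)).trans ?_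
    gcongr
    rw [abs_le]
    constructor <;> linarith [hα.1, hα.2]
  have hmove : |u t x - u α y| ≤ N * (2 * r + 2 * δ) := by
    rcases hcross with rfl | rfl
    · refine (hspace x (hS ⟨ht, hx'⟩)).trans ?_
      gcongr
      rw [abs_le]
      constructor <;> linarith [hx'.1, hx'.2, hy.1, hy.2]
    · refine (htime t (hS ⟨ht, hy⟩)).trans ?_
      gcongr
      rw [abs_le]
      constructor <;> linarith [ht.1, ht.2, hα.1, hα.2]
  have := hslice y hy
  rw [abs_le] at *
  constructor <;> linarith

lemma exists_box_abs_sub_le_after_bad {u : ℝ → ℝ → ℝ} {P U : Set (ℝ × ℝ)} {t₀ x₀ N K ε : ℝ}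
    (hP : IsClosed P) (hU : U ∈ 𝓝 (t₀, x₀)) (hbd : HeatBoundedOn K u U)
    (hN : 0 ≤ N) (hlip : AxisLipschitzOn N u (P ∩ U) U)
    (hu : ∀ p ∈ U, p ∉ P → ContinuousAt (Function.uncurry u) p) (hε : 0 < ε) :
    ∃ r > 0, ∃ δ > 0, Icc (t₀ - δ) (t₀ + δ) ×ˢ Icc (x₀ - r) (x₀ + r) ⊆ U ∧
      ∀ s y, (s, y) ∈ P ∩ Icc (t₀ - δ) (t₀ + δ) ×ˢ Icc (x₀ - r) (x₀ + r) →
        ∀ t ∈ Icc s (t₀ + δ), ∀ x ∈ Icc (x₀ - r) (x₀ + r), |u t x - u t₀ x₀| ≤ ε := by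
  have hK : 0 ≤ K := hbd.nonneg ⟨_, mem_of_mem_nhds hU⟩
  obtain ⟨ρ₀, hρ₀, hball⟩ := Metric.mem_nhds_iff.1 hU
  obtain ⟨ρ₁, hρ₁, hsmall⟩ := exists_pos_mul_lt (half_pos hε) (5 * N + 2 * K)
  obtain ⟨ρ, hρ, hρ_lt⟩ := exists_between (lt_min hρ₀ hρ₁)
  rw [lt_min_iff] at hρ_lt
  have hmem {t x : ℝ} (ht : |t - t₀| < ρ) (hx : |x - x₀| < ρ) : (t, x) ∈ U :=
    hball (max_lt (ht.trans hρ_lt.1) (hx.trans hρ_lt.1))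
  have hdiff {t x : ℝ} (htx : (t, x) ∈ U) : ∃ c, HasHeatOpAt u c t x :=
    let ⟨_, c, _, hc⟩ := hbd t x htx
    ⟨c, hc⟩
  obtain ⟨r, hr, δ, hδ, hslice, hside⟩ := exists_box_abs_sub_le hρ (by positivity : 0 < ε / 4)
    (hdiff (mem_of_mem_nhds hU)).choose_spec.differentiableAt_space.continuousAt fun x hx =>
      (hdiff (hmem (by simpa) hx)).choose_spec.differentiableAt_time.continuousAt
  have hbox : Icc (t₀ - δ) (t₀ + δ) ×ˢ Icc (x₀ - r) (x₀ + r) ⊆ U := by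
    rintro ⟨t, x⟩ ⟨ht, hx⟩
    refine hmem (abs_lt.2 ⟨?_, ?_⟩) (abs_lt.2 ⟨?_, ?_⟩) <;>
      linarith [ht.1, ht.2, hx.1, hx.2, hr.2, hδ.2]
  refine ⟨r, hr.1, δ, hδ.1, hbox, fun s y hy t ht x hx => ?_⟩
  have hle := (hbd.mono hbox).abs_sub_le_after_bad (η := ε / 2 + 5 * N * ρ) (c := u t₀ x₀) hP
    (fun p hp => hu p (hbox hp)) (fun t ht => ?_) (fun α y hy t x hx hcross => ?_) hy t ht x hx
  · nlinarith [mul_le_mul_of_nonneg_left hδ.2.le hK,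
      mul_le_mul_of_nonneg_left hρ_lt.2.le (by positivity : 0 ≤ 5 * N + 2 * K)]
  · exact (hside t ht).imp (fun h => h.trans (by linarith [mul_nonneg hN hρ.le]))
      fun h => h.trans (by linarith [mul_nonneg hN hρ.le])
  · have hcross' := hlip.abs_sub_le_of_cross hN hbox hslice ⟨⟨hy.1, hbox hy.2⟩, hy.2⟩ hx hcross
    nlinarith [mul_le_mul_of_nonneg_left hδ.2.le hN, mul_le_mul_of_nonneg_left hr.2.le hN]

/-- Either bad points accumulate at `(t₀, x₀)` from the past, and the estimate after one of them
covers a neighbourhood, or the past is free of bad points and the interior estimate applies. -/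
lemma continuousAt_of_axisLipschitzOn {u : ℝ → ℝ → ℝ} {P U : Set (ℝ × ℝ)} {t₀ x₀ N K : ℝ}
    (hP : IsClosed P) (h₀ : (t₀, x₀) ∈ P) (hU : U ∈ 𝓝 (t₀, x₀)) (hbd : HeatBoundedOn K u U)
    (hN : 0 ≤ N) (hlip : AxisLipschitzOn N u (P ∩ U) U)
    (hu : ∀ p ∈ U, p ∉ P → ContinuousAt (Function.uncurry u) p) :
    ContinuousAt (Function.uncurry u) (t₀, x₀) := by
  by_cases hpast : ∃ a < t₀, ∃ r > 0, Ico a t₀ ×ˢ Icc (x₀ - 2 * r) (x₀ + 2 * r) ⊆ U \ P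
  · obtain ⟨a, ha, r, hr, hsub⟩ := hpast
    obtain ⟨-, c, -, hc⟩ := hbd t₀ x₀ (mem_of_mem_nhds hU)
    have hIio : ContinuousWithinAt (Function.uncurry u) (Iio t₀ ×ˢ univ) (t₀, x₀) :=
      (hbd.mono (hsub.trans sdiff_subset)).continuousWithinAt_past ha hr
        (fun p hp => (hu p (hsub hp).1 (hsub hp).2).continuousWithinAt)
        hc.differentiableAt_time.continuousAt
    have hIci : ContinuousWithinAt (Function.uncurry u) (Ici t₀ ×ˢ univ) (t₀, x₀) := by
      refine Metric.nhds_basis_closedBall.tendsto_right_iff.2 fun ε hε => ?_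
      obtain ⟨r, hr, δ, hδ, -, hafter⟩ :=
        exists_box_abs_sub_le_after_bad hP hU hbd hN hlip hu hε
      have hnear : Iic (t₀ + δ) ×ˢ Icc (x₀ - r) (x₀ + r) ∈ 𝓝 (t₀, x₀) :=
        prod_mem_nhds (Iic_mem_nhds (by linarith)) (Icc_mem_nhds (by linarith) (by linarith))
      filter_upwards [self_mem_nhdsWithin, nhdsWithin_le_nhds hnear] with p hp hp'
      exact hafter t₀ x₀ ⟨h₀, by constructor <;> constructor <;> simp only <;> linarith⟩ p.1
        ⟨hp.1, hp'.1⟩ p.2 hp'.2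
    have hcover : (Iio t₀ ×ˢ univ ∪ Ici t₀ ×ˢ univ : Set (ℝ × ℝ)) = univ := by
      rw [← union_prod, Iio_union_Ici, univ_prod_univ]
    rw [← continuousWithinAt_univ, ← hcover]
    exact hIio.union hIci
  · refine Metric.nhds_basis_closedBall.tendsto_right_iff.2 fun ε hε => ?_
    obtain ⟨r, hr, δ, hδ, hbox, hafter⟩ :=
      exists_box_abs_sub_le_after_bad hP hU hbd hN hlip hu hε
    obtain ⟨⟨s, y⟩, hsy, hbad⟩ := not_subset.1 fun hsub =>
      hpast ⟨t₀ - δ, by linarith, r / 2, by positivity, hsub⟩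
    rw [mul_div_cancel₀ _ two_ne_zero] at hsy
    have hsy' : (s, y) ∈ Icc (t₀ - δ) (t₀ + δ) ×ˢ Icc (x₀ - r) (x₀ + r) :=
      ⟨⟨hsy.1.1, by linarith [hsy.1.2]⟩, hsy.2⟩
    have hnear : Icc s (t₀ + δ) ×ˢ Icc (x₀ - r) (x₀ + r) ∈ 𝓝 (t₀, x₀) :=
      prod_mem_nhds (Icc_mem_nhds hsy.1.2 (by linarith))
        (Icc_mem_nhds (by linarith) (by linarith))
    filter_upwards [hnear] with p hp
    exact hafter s y ⟨by_contra fun h => hbad ⟨hbox hsy', h⟩, hsy'⟩ p.1 hp.1 p.2 hp.2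

/-- The points whose increments of `u` of length less than `r` along the coordinate directions,
within `Ω`, obey the Lipschitz bound with constant `N`; the closed sets of the Baire argument. -/
def axisLipschitzSet (u : ℝ → ℝ → ℝ) (Ω : Set (ℝ × ℝ)) (N r : ℝ) : Set (ℝ × ℝ) :=
  {p | (∀ s, |s - p.1| < r → (s, p.2) ∈ Ω → |u s p.2 - u p.1 p.2| ≤ N * |s - p.1|) ∧
    ∀ y, |y - p.2| < r → (p.1, y) ∈ Ω → |u p.1 y - u p.1 p.2| ≤ N * |y - p.2|}

lemma tendsto_nhdsWithin_axisLipschitzSet {u : ℝ → ℝ → ℝ} {Ω : Set (ℝ × ℝ)} {N r : ℝ}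
    {p : ℝ × ℝ} (hr : 0 < r) (hΩ : Ω ∈ 𝓝 p) (hspace : ContinuousAt (u p.1) p.2) :
    Tendsto (fun q : ℝ × ℝ => u q.1 q.2) (𝓝[axisLipschitzSet u Ω N r] p) (𝓝 (u p.1 p.2)) := by
  have hproj : Tendsto (fun q : ℝ × ℝ => (p.1, q.2)) (𝓝 p) (𝓝 p) :=
    (by fun_prop : Continuous fun q : ℝ × ℝ => (p.1, q.2)).tendsto p
  have hdist : Tendsto (fun q : ℝ × ℝ => |p.1 - q.1|) (𝓝 p) (𝓝 0) := by
    simpa using (by fun_prop : Continuous fun q : ℝ × ℝ => |p.1 - q.1|).tendsto p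
  have hvert : ∀ᶠ q in 𝓝[axisLipschitzSet u Ω N r] p,
      |u p.1 q.2 - u q.1 q.2| ≤ N * |p.1 - q.1| := by
    filter_upwards [self_mem_nhdsWithin, nhdsWithin_le_nhds (hproj hΩ),
      (hdist.eventually (gt_mem_nhds hr)).filter_mono nhdsWithin_le_nhds] with q hq hqΩ hqr
    exact hq.1 p.1 hqr hqΩ
  have hzero : Tendsto (fun q : ℝ × ℝ => N * |p.1 - q.1|) (𝓝[axisLipschitzSet u Ω N r] p)
      (𝓝 0) := by
    simpa using (hdist.const_mul N).mono_left nhdsWithin_le_nhds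
  have hslice : Tendsto (fun q : ℝ × ℝ => u p.1 q.2) (𝓝[axisLipschitzSet u Ω N r] p)
      (𝓝 (u p.1 p.2)) :=
    (hspace.tendsto.comp (continuousAt_snd (p := p))).mono_left nhdsWithin_le_nhds
  simpa using hslice.sub (squeeze_zero_norm' hvert hzero)

/-- `u` need not be jointly continuous, but its restriction to the set is. -/
lemma closure_axisLipschitzSet_inter_subset {u : ℝ → ℝ → ℝ} {Ω : Set (ℝ × ℝ)} {N r : ℝ}
    (hΩ : IsOpen Ω) (hr : 0 < r)
    (htime : ∀ t x, (t, x) ∈ Ω → ContinuousAt (fun s => u s x) t)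
    (hspace : ∀ t x, (t, x) ∈ Ω → ContinuousAt (u t) x) :
    closure (axisLipschitzSet u Ω N r) ∩ Ω ⊆ axisLipschitzSet u Ω N r := by
  rintro p ⟨hcl, hp⟩
  have := mem_closure_iff_nhdsWithin_neBot.1 hcl
  have hbase := tendsto_nhdsWithin_axisLipschitzSet (N := N) hr (hΩ.mem_nhds hp) (hspace _ _ hp)
  constructor
  · intro s hs hsΩ
    have hnear : ∀ᶠ q : ℝ × ℝ in 𝓝 p, |s - q.1| < r :=
      (by fun_prop : Continuous fun q : ℝ × ℝ => |s - q.1|).continuousAt.eventually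
        (gt_mem_nhds hs)
    have hmem : ∀ᶠ q : ℝ × ℝ in 𝓝 p, (s, q.2) ∈ Ω :=
      (by fun_prop : Continuous fun q : ℝ × ℝ => (s, q.2)).continuousAt.eventually
        (hΩ.mem_nhds hsΩ)
    have hslice : Tendsto (fun q : ℝ × ℝ => u s q.2) (𝓝 p) (𝓝 (u s p.2)) :=
      (hspace s p.2 hsΩ).tendsto.comp (continuousAt_snd (p := p))
    refine le_of_tendsto_of_tendsto ((hslice.mono_left nhdsWithin_le_nhds).sub hbase).abs
      ((by fun_prop : Continuous fun q : ℝ × ℝ => N * |s - q.1|).continuousWithinAt) ?_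
    filter_upwards [self_mem_nhdsWithin, nhdsWithin_le_nhds hnear, nhdsWithin_le_nhds hmem]
      with q hq hqr hqΩ using hq.1 s hqr hqΩ
  · intro y hy hyΩ
    have hnear : ∀ᶠ q : ℝ × ℝ in 𝓝 p, |y - q.2| < r :=
      (by fun_prop : Continuous fun q : ℝ × ℝ => |y - q.2|).continuousAt.eventually
        (gt_mem_nhds hy)
    have hmem : ∀ᶠ q : ℝ × ℝ in 𝓝 p, (q.1, y) ∈ Ω :=
      (by fun_prop : Continuous fun q : ℝ × ℝ => (q.1, y)).continuousAt.eventually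
        (hΩ.mem_nhds hyΩ)
    have hslice : Tendsto (fun q : ℝ × ℝ => u q.1 y) (𝓝 p) (𝓝 (u p.1 y)) :=
      (htime p.1 y hyΩ).tendsto.comp (continuousAt_fst (p := p))
    refine le_of_tendsto_of_tendsto ((hslice.mono_left nhdsWithin_le_nhds).sub hbase).abs
      ((by fun_prop : Continuous fun q : ℝ × ℝ => N * |y - q.2|).continuousWithinAt) ?_
    filter_upwards [self_mem_nhdsWithin, nhdsWithin_le_nhds hnear, nhdsWithin_le_nhds hmem]
      with q hq hqr hqΩ using hq.2 y hqr hqΩ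

lemma eventually_abs_sub_le_mul {g : ℝ → ℝ} {x : ℝ} (hg : DifferentiableAt ℝ g x) :
    ∀ᶠ n : ℕ in atTop, ∀ y, |y - x| < 1 / (n + 1) → |g y - g x| ≤ n * |y - x| := by
  obtain ⟨C, hC⟩ := hg.isBigO_sub.bound
  obtain ⟨δ, hδ, hball⟩ := Metric.eventually_nhds_iff.1 hC
  filter_upwards [tendsto_natCast_atTop_atTop.eventually_ge_atTop C,
    tendsto_one_div_add_atTop_nhds_zero_nat.eventually (gt_mem_nhds hδ)] with n hn hnδ y hy
  exact (hball (hy.trans hnδ)).trans (mul_le_mul_of_nonneg_right hn (abs_nonneg _))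

lemma exists_mem_axisLipschitzSet {u : ℝ → ℝ → ℝ} {t x : ℝ} (Ω : Set (ℝ × ℝ))
    (htime : DifferentiableAt ℝ (fun s => u s x) t) (hspace : DifferentiableAt ℝ (u t) x) :
    ∃ n : ℕ, (t, x) ∈ axisLipschitzSet u Ω n (1 / (n + 1)) := by
  obtain ⟨n, hn₁, hn₂⟩ :=
    ((eventually_abs_sub_le_mul htime).and (eventually_abs_sub_le_mul hspace)).exists
  exact ⟨n, fun s hs _ => hn₁ s hs, fun y hy _ => hn₂ y hy⟩

lemma exists_axisLipschitzOn_portion {u : ℝ → ℝ → ℝ} {P Ω : Set (ℝ × ℝ)} (hP : IsClosed P)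
    (hΩ : IsOpen Ω) (hne : (P ∩ Ω).Nonempty)
    (htime : ∀ t x, (t, x) ∈ Ω → DifferentiableAt ℝ (fun s => u s x) t)
    (hspace : ∀ t x, (t, x) ∈ Ω → DifferentiableAt ℝ (u t) x) :
    ∃ p ∈ P ∩ Ω, ∃ U ∈ 𝓝 p, ∃ N, 0 ≤ N ∧ AxisLipschitzOn N u (P ∩ U) U := by
  let A (n : ℕ) : Set (ℝ × ℝ) := axisLipschitzSet u Ω n (1 / (n + 1))
  have hclosed (n : ℕ) : IsClosed ((↑) ⁻¹' A n : Set ↥(P ∩ Ω)) :=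
    isClosed_preimage_val.2 fun p hp => closure_axisLipschitzSet_inter_subset hΩ
      Nat.one_div_pos_of_nat (fun t x h => (htime t x h).continuousAt)
      (fun t x h => (hspace t x h).continuousAt)
      ⟨closure_mono inter_subset_right hp.2, hp.1.2⟩
  have hcover : ⋃ n, ((↑) ⁻¹' A n : Set ↥(P ∩ Ω)) = univ :=
    iUnion_eq_univ_iff.2 fun ⟨p, hp⟩ =>
      exists_mem_axisLipschitzSet Ω (htime p.1 p.2 hp.2) (hspace p.1 p.2 hp.2)
  have := hne.to_subtype
  have : LocallyCompactSpace ↥(P ∩ Ω) :=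
    (hP.isLocallyClosed.inter hΩ.isLocallyClosed).locallyCompactSpace
  obtain ⟨n, p, hp⟩ := nonempty_interior_of_iUnion_of_closed hclosed hcover
  obtain ⟨V, hV, hVA⟩ := mem_nhds_subtype _ p _ |>.1 (mem_interior_iff_mem_nhds.1 hp)
  have hball : Metric.ball (p : ℝ × ℝ) (1 / (n + 1) / 2) ∈ 𝓝 (p : ℝ × ℝ) :=
    Metric.ball_mem_nhds _ (half_pos Nat.one_div_pos_of_nat)
  refine ⟨p, p.2, V ∩ Ω ∩ Metric.ball (p : ℝ × ℝ) (1 / (n + 1) / 2),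
    inter_mem (inter_mem hV (hΩ.mem_nhds p.2.2)) hball, n, n.cast_nonneg, ?_⟩
  rintro t x ⟨hP', ⟨hV', hΩ'⟩, hb⟩
  have hA : (t, x) ∈ A n := hVA (a := ⟨(t, x), hP', hΩ'⟩) hV'
  have hdist (q : ℝ × ℝ) (hq : q ∈ Metric.ball (p : ℝ × ℝ) (1 / (n + 1) / 2)) :
      dist q (t, x) < 1 / (n + 1) := by
    simpa using (dist_triangle_right q (t, x) p).trans_lt (add_lt_add hq hb)
  exact ⟨fun s hs => hA.1 s ((le_max_left _ _).trans_lt (hdist (s, x) hs.2)) hs.1.2,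
    fun y hy => hA.2 y ((le_max_right _ _).trans_lt (hdist (t, y) hy.2)) hy.1.2⟩

/-- If discontinuities existed, by Baire the separate derivatives would be uniformly controlled
at those in some box; the heat equation then forces continuity there. -/
theorem continuousAt_of_heatBoundedOn {u : ℝ → ℝ → ℝ} {Ω : Set (ℝ × ℝ)} (hΩ : IsOpen Ω)
    (hbd : ∀ p ∈ Ω, ∃ K, ∃ U ∈ 𝓝 p, HeatBoundedOn K u U) :
    ∀ p ∈ Ω, ContinuousAt (Function.uncurry u) p := by
  set P : Set (ℝ × ℝ) := {p | ∀ᶠ q in 𝓝 p, ContinuousAt (Function.uncurry u) q}ᶜ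
  have hP : IsClosed P := isOpen_setOfPred_eventually_nhds.isClosed_compl
  have hcont (p : ℝ × ℝ) (hp : p ∉ P) : ContinuousAt (Function.uncurry u) p :=
    (not_not.1 hp : ∀ᶠ q in 𝓝 p, ContinuousAt (Function.uncurry u) q).self_of_nhds
  suffices hempty : ¬ (P ∩ Ω).Nonempty from
    fun p hp => hcont p fun hpP => hempty ⟨p, hpP, hp⟩
  intro hne
  have hop (t x : ℝ) (h : (t, x) ∈ Ω) : ∃ c, HasHeatOpAt u c t x :=
    let ⟨_, _, hU, hb⟩ := hbd _ h
    let ⟨_, c, _, hc⟩ := hb t x (mem_of_mem_nhds hU)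
    ⟨c, hc⟩
  obtain ⟨p, ⟨hpP, hpΩ⟩, U, hU, N, hN, hlip⟩ := exists_axisLipschitzOn_portion hP hΩ hne
    (fun t x h => (hop t x h).choose_spec.differentiableAt_time)
    fun t x h => (hop t x h).choose_spec.differentiableAt_space
  obtain ⟨K, V, hV, hbdV⟩ := hbd p hpΩ
  have hlip' : AxisLipschitzOn N u (P ∩ (U ∩ V)) (U ∩ V) := fun t x h =>
    (hlip t x ⟨h.1, h.2.1⟩).imp (fun ht s hs => ht s hs.1) fun hx y hy => hx y hy.1
  refine hpP ?_
  filter_upwards [eventually_mem_nhds_iff.2 (inter_mem hU hV)] with q hq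
  by_cases hqP : q ∈ P
  · exact continuousAt_of_axisLipschitzOn hP hqP hq (hbdV.mono inter_subset_right) hN hlip'
      fun r _ => hcont r
  · exact hcont q hqP

/-! ### Ancient solutions of the drift equation -/

lemma HasHeatOpAt.le_of_isLocalMax_of_isLocalMin {Q : ℝ → ℝ → ℝ} {b c t X Y : ℝ}
    (hX : HasHeatOpAt Q b t X) (hY : HasHeatOpAt Q c t Y) (hmax : IsLocalMax (Q t) X)
    (hmin : IsLocalMin (Q t) Y)
    (hpast : ∀ᶠ s in 𝓝[<] t, Q s X - Q s Y ≤ Q t X - Q t Y) : c ≤ b := by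
  obtain ⟨d, a, e, hd, he, ha, rfl⟩ := hX
  obtain ⟨d', a', e', hd', he', ha', rfl⟩ := hY
  have hspaceX : e ≤ 0 := second_hasDerivAt_nonpos_of_isLocalMax hmax hd he
  have hspaceY : -e' ≤ 0 := second_hasDerivAt_nonpos_of_isLocalMax hmin.neg
    (hd'.mono fun y hy => hy.fun_neg) he'.fun_neg
  have htime : 0 ≤ a - a' := hasDerivAt_nonneg_of_eventually_le_nhdsLT (ha.fun_sub ha') hpast
  linarith

lemma exists_forall_sub_le_sub {Q : ℝ → ℝ → ℝ} {s τ a b t₀ Y₀ X₀ : ℝ}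
    (hQ : ContinuousOn (Function.uncurry Q) (Icc s τ ×ˢ Icc a b)) (ht₀ : t₀ ∈ Icc s τ)
    (hY₀ : Y₀ ∈ Icc a b) (hX₀ : X₀ ∈ Icc a b) (hYX₀ : Y₀ ≤ X₀) :
    ∃ t ∈ Icc s τ, ∃ Y ∈ Icc a b, ∃ X ∈ Icc a b, Y ≤ X ∧
      ∀ t' ∈ Icc s τ, ∀ Y' ∈ Icc a b, ∀ X' ∈ Icc a b, Y' ≤ X' →
        Q t' X' - Q t' Y' ≤ Q t X - Q t Y := by
  set S : Set (ℝ × ℝ × ℝ) := (Icc s τ ×ˢ Icc a b ×ˢ Icc a b) ∩ {p | p.2.1 ≤ p.2.2}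
  have hS : IsCompact S := (isCompact_Icc.prod (isCompact_Icc.prod isCompact_Icc)).inter_right
    (isClosed_le (by fun_prop) (by fun_prop))
  have hdiff : ContinuousOn (fun p : ℝ × ℝ × ℝ => Q p.1 p.2.2 - Q p.1 p.2.1) S :=
    .sub (hQ.comp (f := fun p : ℝ × ℝ × ℝ => (p.1, p.2.2)) (by fun_prop)
        fun p hp => ⟨hp.1.1, hp.1.2.2⟩)
      (hQ.comp (f := fun p : ℝ × ℝ × ℝ => (p.1, p.2.1)) (by fun_prop)
        fun p hp => ⟨hp.1.1, hp.1.2.1⟩)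
  have hne : S.Nonempty := ⟨(t₀, Y₀, X₀), ⟨ht₀, hY₀, hX₀⟩, hYX₀⟩
  obtain ⟨⟨t, Y, X⟩, ⟨⟨ht, hY, hX⟩, hYX⟩, hmax⟩ := hS.exists_isMaxOn hne hdiff
  exact ⟨t, ht, Y, hY, X, hX, hYX, fun t' ht' Y' hY' X' hX' hYX' =>
    hmax (show (t', Y', X') ∈ S from ⟨⟨ht', hY', hX'⟩, hYX'⟩)⟩

/-- Maximum principle for the doubled function `(t, Y, X) ↦ Q t X - Q t Y` on `Y ≤ X`. -/
theorem antitone_of_doubling {Q c : ℝ → ℝ → ℝ} {s τ R : ℝ}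
    (hcont : ContinuousOn (Function.uncurry Q) (Icc s τ ×ˢ Icc (-R) R))
    (hop : ∀ t ∈ Icc s τ, ∀ x, HasHeatOpAt Q (c t x) t x)
    (hstrict : ∀ t ∈ Icc s τ, ∀ Y X, Y < X → deriv (Q t) Y = 0 → deriv (Q t) X = 0 →
      c t X < c t Y)
    (hbot : Antitone (Q s))
    (hside : ∀ t ∈ Icc s τ, ∀ Y X, Y ≤ X → R ≤ X ∨ Y ≤ -R → Q t X ≤ Q t Y) :
    ∀ t ∈ Icc s τ, Antitone (Q t) := by
  intro t₀ ht₀ Y₀ X₀ hYX₀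
  by_contra! hpos₀
  obtain ⟨hX₀, hY₀⟩ := not_or.1 fun h => (hside t₀ ht₀ Y₀ X₀ hYX₀ h).not_gt hpos₀
  rw [not_le] at hX₀ hY₀
  obtain ⟨t, ht, Y, hY, X, hX, hYX, hmax⟩ := exists_forall_sub_le_sub hcont ht₀
    ⟨hY₀.le, hYX₀.trans hX₀.le⟩ ⟨hY₀.le.trans hYX₀, hX₀.le⟩ hYX₀
  have hpos : Q t Y < Q t X := sub_pos.1 ((sub_pos.2 hpos₀).trans_le
    (hmax t₀ ht₀ Y₀ ⟨hY₀.le, hYX₀.trans hX₀.le⟩ X₀ ⟨hY₀.le.trans hYX₀, hX₀.le⟩ hYX₀))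
  have hlt : Y < X := hYX.lt_of_ne fun h => hpos.ne (congrArg (Q t) h)
  have hXR : X < R := hX.2.lt_of_ne fun h => (hside t ht Y X hYX (.inl h.ge)).not_gt hpos
  have hYR : -R < Y := hY.1.lt_of_ne fun h => (hside t ht Y X hYX (.inr h.ge)).not_gt hpos
  have hst : s < t := ht.1.lt_of_ne fun h => (h ▸ hbot hYX : Q t X ≤ Q t Y).not_gt hpos
  have hXmax : IsLocalMax (Q t) X := by
    filter_upwards [Icc_mem_nhds hlt hXR] with z hz
    linarith [hmax t ht Y hY z ⟨hYR.le.trans hz.1, hz.2⟩ hz.1]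
  have hYmin : IsLocalMin (Q t) Y := by
    filter_upwards [Icc_mem_nhds hYR hlt] with z hz
    linarith [hmax t ht z ⟨hz.1, hz.2.trans hXR.le⟩ X hX hz.2]
  refine (hstrict t ht Y X hlt hYmin.deriv_eq_zero hXmax.deriv_eq_zero).not_ge
    ((hop t ht X).le_of_isLocalMax_of_isLocalMin (hop t ht Y) hXmax hYmin ?_)
  filter_upwards [Ioo_mem_nhdsLT hst] with r hr
  exact hmax r ⟨hr.1.le, hr.2.le.trans ht.2⟩ Y hY X hX hYX

lemma hasDerivAt_tanh (x : ℝ) : HasDerivAt tanh (1 - tanh x ^ 2) x := by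
  have hc := (cosh_pos x).ne'
  have htanh : tanh = fun y => sinh y / cosh y := funext tanh_eq_sinh_div_cosh
  rw [htanh]
  refine ((hasDerivAt_sinh x).fun_div (hasDerivAt_cosh x) hc).congr_deriv ?_
  field_simp

lemma hasDerivAt_cosh_rpow (ν x : ℝ) :
    HasDerivAt (fun y => cosh y ^ ν) (ν * (tanh x * cosh x ^ ν)) x := by
  refine ((hasDerivAt_cosh x).rpow_const (p := ν) (.inl (cosh_pos x).ne')).congr_deriv ?_
  rw [tanh_eq_sinh_div_cosh, rpow_sub_one (cosh_pos x).ne']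
  ring

lemma hasDerivAt_tanh_mul_cosh_rpow (ν x : ℝ) :
    HasDerivAt (fun y => tanh y * cosh y ^ ν) ((1 + (ν - 1) * tanh x ^ 2) * cosh x ^ ν) x :=
  ((hasDerivAt_tanh x).fun_mul (hasDerivAt_cosh_rpow ν x)).congr_deriv (by ring)

lemma tendsto_cosh_atTop : Tendsto cosh atTop atTop :=
  tendsto_atTop_mono' _ ((eventually_ge_atTop 0).mono fun x hx =>
    (self_le_sinh_iff.2 hx).trans (sinh_lt_cosh x).le) tendsto_id

/-- The odd primitive of `cosh ^ ν`. -/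
def coshPrimitive (ν x : ℝ) : ℝ := ∫ y in (0 : ℝ)..x, cosh y ^ ν

lemma hasDerivAt_coshPrimitive (ν x : ℝ) : HasDerivAt (coshPrimitive ν) (cosh x ^ ν) x := by
  have hc : Continuous fun y => cosh y ^ ν :=
    continuous_iff_continuousAt.2 fun y => (hasDerivAt_cosh_rpow ν y).continuousAt
  exact intervalIntegral.integral_hasDerivAt_right (hc.intervalIntegrable _ _)
    (hc.stronglyMeasurableAtFilter _ _) hc.continuousAt

lemma continuous_coshPrimitive (ν : ℝ) : Continuous (coshPrimitive ν) :=
  continuous_iff_continuousAt.2 fun x => (hasDerivAt_coshPrimitive ν x).continuousAt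

lemma coshPrimitive_strictMono (ν : ℝ) : StrictMono (coshPrimitive ν) :=
  strictMono_of_hasDerivAt_pos (hasDerivAt_coshPrimitive ν) fun x => rpow_pos_of_pos (cosh_pos x) ν

lemma coshPrimitive_neg (ν x : ℝ) : coshPrimitive ν (-x) = -coshPrimitive ν x := by
  have h := intervalIntegral.integral_comp_neg (a := 0) (b := x) fun y => cosh y ^ ν
  simp only [cosh_neg, neg_zero] at h
  rw [coshPrimitive, coshPrimitive, h, intervalIntegral.integral_symm]

lemma antitone_sub_coshPrimitive {g : ℝ → ℝ} {C l : ℝ} (hg : Differentiable ℝ g)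
    (hbd : ∀ x, |deriv g x| ≤ C * cosh x ^ l) : Antitone fun x => g x - C * coshPrimitive l x :=
  antitone_of_hasDerivAt_nonpos
    (fun x => (hg x).hasDerivAt.fun_sub ((hasDerivAt_coshPrimitive l x).const_mul C))
    fun x => sub_nonpos.2 ((le_abs_self _).trans (hbd x))

lemma monotone_tanh_mul_cosh_rpow_sub_coshPrimitive {ν : ℝ} (hν : 1 ≤ ν) :
    Monotone fun x => tanh x * cosh x ^ ν - coshPrimitive ν x := by
  refine monotone_of_hasDerivAt_nonneg (fun x => (hasDerivAt_tanh_mul_cosh_rpow ν x).fun_sub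
    (hasDerivAt_coshPrimitive ν x)) fun x => ?_
  have hnonneg : 0 ≤ (ν - 1) * tanh x ^ 2 * cosh x ^ ν :=
    mul_nonneg (mul_nonneg (sub_nonneg.2 hν) (sq_nonneg _)) (rpow_nonneg (cosh_pos x).le ν)
  exact hnonneg.trans_eq (by ring)

lemma strictMono_tanh_mul_cosh_rpow {ν : ℝ} (hν : 1 ≤ ν) :
    StrictMono fun x => tanh x * cosh x ^ ν := by
  simpa using (monotone_tanh_mul_cosh_rpow_sub_coshPrimitive hν).add_strictMono
    (coshPrimitive_strictMono ν)

lemma exists_forall_le_of_odd {g : ℝ → ℝ} {R₀ : ℝ} (hg : Continuous g)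
    (hodd : ∀ x, g (-x) = -g x) (hanti : AntitoneOn (fun x => g x + x) (Ici R₀)) :
    ∃ R, ∀ Y X, Y ≤ X → R ≤ X ∨ Y ≤ -R → g X ≤ g Y := by
  obtain ⟨B, hB⟩ := isCompact_Icc.exists_bound_of_continuousOn (s := Icc (-R₀) R₀)
    hg.continuousOn
  have hfar (X : ℝ) (hX : R₀ ≤ X) : g X ≤ g R₀ + R₀ - X := by
    linarith [hanti self_mem_Ici hX hX]
  have hright (Y X : ℝ) (hYX : Y ≤ X) (hX : |R₀| + 2 * |B| + 2 * |g R₀| ≤ X) : g X ≤ g Y := by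
    have hX₀ : R₀ ≤ X := by linarith [le_abs_self R₀, abs_nonneg B, abs_nonneg (g R₀)]
    rcases le_total R₀ Y with hY | hY
    · linarith [hanti hY hX₀ hYX]
    have hYg : -(|B| + |g R₀|) ≤ g Y := by
      rcases le_total (-R₀) Y with hY' | hY'
      · linarith [(abs_le.1 (hB Y ⟨hY', hY⟩)).1, le_abs_self B, abs_nonneg (g R₀)]
      · linarith [hfar (-Y) (le_neg_of_le_neg hY'), hodd Y, le_abs_self (g R₀), abs_nonneg B]
    linarith [hfar X hX₀, le_abs_self R₀, le_abs_self (g R₀), abs_nonneg B, abs_nonneg (g R₀)]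
  refine ⟨|R₀| + 2 * |B| + 2 * |g R₀|, fun Y X hYX => ?_⟩
  rintro (hX | hY)
  · exact hright Y X hYX hX
  · linarith [hright (-X) (-Y) (neg_le_neg hYX) (le_neg_of_le_neg hY), hodd X, hodd Y]

lemma exists_forall_coshPrimitive_sub_le {l μ ε : ℝ} (C : ℝ) (hl : 0 ≤ l) (hlμ : l < μ)
    (hε : 0 < ε) :
    ∃ R, ∀ Y X, Y ≤ X → R ≤ X ∨ Y ≤ -R →
      C * coshPrimitive l X - ε * coshPrimitive μ X ≤
        C * coshPrimitive l Y - ε * coshPrimitive μ Y := by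
  obtain ⟨R₀, hR₀⟩ := eventually_atTop.1
    (((tendsto_rpow_atTop (sub_pos.2 hlμ)).comp tendsto_cosh_atTop).eventually_ge_atTop
      ((|C| + 1) / ε))
  have hderiv (x : ℝ) : HasDerivAt (fun x => C * coshPrimitive l x - ε * coshPrimitive μ x + x)
      (C * cosh x ^ l - ε * cosh x ^ μ + 1) x :=
    (((hasDerivAt_coshPrimitive l x).const_mul C).fun_sub
      ((hasDerivAt_coshPrimitive μ x).const_mul ε)).fun_add (hasDerivAt_id x)
  refine exists_forall_le_of_odd (R₀ := R₀) (.sub ((continuous_coshPrimitive l).const_mul C)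
    ((continuous_coshPrimitive μ).const_mul ε)) (fun x => ?_) ?_
  · rw [coshPrimitive_neg, coshPrimitive_neg]
    ring
  refine antitoneOn_of_hasDerivWithinAt_nonpos (convex_Ici R₀)
    (fun x _ => (hderiv x).continuousAt.continuousWithinAt)
    (fun x _ => (hderiv x).hasDerivWithinAt) fun x hx => ?_
  have hmul : cosh x ^ μ = cosh x ^ l * cosh x ^ (μ - l) := by
    rw [← rpow_add (cosh_pos x), add_sub_cancel]
  have hge := (div_le_iff₀' hε).1 (hR₀ x (interior_subset hx))
  have hone : 1 ≤ cosh x ^ l := one_le_rpow (one_le_cosh x) hl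
  simp only [Function.comp_apply] at hge
  rw [hmul]
  nlinarith [le_abs_self C]

/-- The comparison function for the operator `∂ₜ - ∂ₓ² + β tanh x ∂ₓ`: its first term decays
in time, and its second term dominates at spatial infinity when `l < μ`. -/
def driftBarrier (β l μ A ε t x : ℝ) : ℝ :=
  A * exp (-(β - l) * t) * coshPrimitive l x + ε * coshPrimitive μ x

lemma continuous_driftBarrier (β l μ A ε : ℝ) :
    Continuous (Function.uncurry (driftBarrier β l μ A ε)) :=
  .add (.mul (by fun_prop) ((continuous_coshPrimitive l).comp continuous_snd))
    (((continuous_coshPrimitive μ).comp continuous_snd).const_mul ε)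

lemma hasDerivAt_driftBarrier (β l μ A ε t x : ℝ) :
    HasDerivAt (driftBarrier β l μ A ε t)
      (A * exp (-(β - l) * t) * cosh x ^ l + ε * cosh x ^ μ) x :=
  ((hasDerivAt_coshPrimitive l x).const_mul _).fun_add ((hasDerivAt_coshPrimitive μ x).const_mul ε)

lemma hasHeatOpAt_coshPrimitive (ν t x : ℝ) :
    HasHeatOpAt (fun _ y => coshPrimitive ν y) (-(ν * (tanh x * cosh x ^ ν))) t x :=
  .of_space (hasDerivAt_coshPrimitive ν) (hasDerivAt_cosh_rpow ν x) t

lemma hasHeatOpAt_driftBarrier (β l μ A ε t x : ℝ) :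
    HasHeatOpAt (driftBarrier β l μ A ε)
      ((β - l) * (A * exp (-(β - l) * t)) * (tanh x * cosh x ^ l - coshPrimitive l x)
        + (β - μ) * ε * (tanh x * cosh x ^ μ)
        - β * tanh x * deriv (driftBarrier β l μ A ε t) x) t x := by
  have hexp : HasDerivAt (fun s => A * exp (-(β - l) * s))
      (-(β - l) * (A * exp (-(β - l) * t))) t :=
    (((hasDerivAt_id t).const_mul (-(β - l))).exp.const_mul A).congr_deriv (by simp only [id]; ring)
  refine ((hasHeatOpAt_coshPrimitive l t x).time_mul hexp).add
    ((hasHeatOpAt_coshPrimitive μ t x).const_mul ε) |>.congr_value ?_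
  rw [(hasDerivAt_driftBarrier β l μ A ε t x).deriv]
  ring

lemma HasHeatOpAt.sub_driftBarrier {q : ℝ → ℝ → ℝ} {β t x : ℝ} (l μ A ε : ℝ)
    (hq : HasHeatOpAt q (-(β * tanh x * deriv (q t) x)) t x) :
    HasHeatOpAt (fun t x => q t x - driftBarrier β l μ A ε t x)
      (-((β - l) * (A * exp (-(β - l) * t)) * (tanh x * cosh x ^ l - coshPrimitive l x))
        - (β - μ) * ε * (tanh x * cosh x ^ μ)
        - β * tanh x * deriv (fun y => q t y - driftBarrier β l μ A ε t y) x) t x := by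
  refine (hq.sub (hasHeatOpAt_driftBarrier β l μ A ε t x)).congr_value ?_
  rw [deriv_fun_sub hq.differentiableAt_space
    (hasDerivAt_driftBarrier β l μ A ε t x).differentiableAt]
  ring

section Ancient

variable {q : ℝ → ℝ → ℝ} {β l C : ℝ}

lemma antitone_sub_driftBarrier {μ ε s τ : ℝ} (hl : 1 ≤ l) (hlμ : l < μ) (hμβ : μ < β)
    (hε : 0 < ε) (hC : 0 ≤ C) (hsτ : s ≤ τ)
    (hcont : ContinuousOn (Function.uncurry q) (Icc s τ ×ˢ univ))
    (hop : ∀ t ∈ Icc s τ, ∀ x, HasHeatOpAt q (-(β * tanh x * deriv (q t) x)) t x)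
    (hbd : ∀ t ∈ Icc s τ, ∀ x, |deriv (q t) x| ≤ C * cosh x ^ l) :
    Antitone fun x => q τ x - driftBarrier β l μ (C * exp ((β - l) * s)) ε τ x := by
  obtain ⟨R, hR⟩ := exists_forall_coshPrimitive_sub_le C (zero_le_one.trans hl) hlμ hε
  have hgrad (t : ℝ) (ht : t ∈ Icc s τ) : Antitone fun x => q t x - C * coshPrimitive l x :=
    antitone_sub_coshPrimitive (fun x => (hop t ht x).differentiableAt_space) (hbd t ht)
  have hlβ : 0 ≤ β - l := sub_nonneg.2 (hlμ.trans hμβ).le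
  refine antitone_of_doubling (R := R)
    (Q := fun t x => q t x - driftBarrier β l μ (C * exp ((β - l) * s)) ε t x)
    ((hcont.mono (prod_mono Subset.rfl (subset_univ _))).sub
      (continuous_driftBarrier β l μ _ ε).continuousOn)
    (fun t ht x => (hop t ht x).sub_driftBarrier l μ _ ε) ?_ ?_ ?_ τ (right_mem_Icc.2 hsτ)
  · intro t _ Y X hYX hY hX
    have hl' := mul_le_mul_of_nonneg_left
      (monotone_tanh_mul_cosh_rpow_sub_coshPrimitive hl hYX.le)
      (by positivity : 0 ≤ (β - l) * (C * exp ((β - l) * s) * exp (-(β - l) * t)))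
    have hμ' := mul_lt_mul_of_pos_left (strictMono_tanh_mul_cosh_rpow (hl.trans hlμ.le) hYX)
      (mul_pos (sub_pos.2 hμβ) hε)
    simp only [hY, hX, mul_zero, sub_zero]
    linarith
  · intro Y X hYX
    have hgrad' := hgrad s (left_mem_Icc.2 hsτ) hYX
    have hμ' := mul_le_mul_of_nonneg_left ((coshPrimitive_strictMono μ).monotone hYX) hε.le
    have hexp : exp ((β - l) * s) * exp (-(β - l) * s) = 1 := by
      rw [← exp_add, neg_mul, add_neg_cancel, exp_zero]
    simp only [driftBarrier, mul_assoc C, hexp, mul_one] at hgrad' ⊢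
    linarith
  · intro t ht Y X hYX hside
    have hgrad' := hgrad t ht hYX
    have hl' := mul_le_mul_of_nonneg_left ((coshPrimitive_strictMono l).monotone hYX)
      (by positivity : 0 ≤ C * exp ((β - l) * s) * exp (-(β - l) * t))
    simp only [driftBarrier] at hgrad' ⊢
    linarith [hR Y X hYX hside]

theorem antitone_of_ancient (hl : 1 ≤ l) (hlβ : l < β)
    (hcont : ∀ t < 0, ∀ x, ContinuousAt (Function.uncurry q) (t, x))
    (hop : ∀ t < 0, ∀ x, HasHeatOpAt q (-(β * tanh x * deriv (q t) x)) t x)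
    (hbd : ∀ t < 0, ∀ x, |deriv (q t) x| ≤ C * cosh x ^ l) :
    ∀ t < 0, Antitone (q t) := by
  intro τ hτ Y X hYX
  obtain ⟨μ, hlμ, hμβ⟩ := exists_between hlβ
  have hC : 0 ≤ C := by simpa using (abs_nonneg _).trans (hbd τ hτ 0)
  have hlim (x : ℝ) : Tendsto
      (fun s => q τ x - driftBarrier β l μ (C * exp ((β - l) * s)) (exp s) τ x) atBot
      (𝓝 (q τ x)) := by
    have hdecay : Tendsto (fun s => exp ((β - l) * s)) atBot (𝓝 0) :=
      tendsto_exp_atBot.comp (tendsto_id.const_mul_atBot (sub_pos.2 hlβ))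
    simpa [driftBarrier] using ((((hdecay.const_mul C).mul_const _).mul_const _).add
      (tendsto_exp_atBot.mul_const (coshPrimitive μ x))).const_sub (q τ x)
  refine le_of_tendsto_of_tendsto (hlim X) (hlim Y) ?_
  filter_upwards [Iic_mem_atBot τ] with s hs
  exact antitone_sub_driftBarrier hl hlμ hμβ (exp_pos s) hC hs
    (fun p hp => (hcont p.1 (hp.1.2.trans_lt hτ) p.2).continuousWithinAt)
    (fun t ht => hop t (ht.2.trans_lt hτ)) (fun t ht => hbd t (ht.2.trans_lt hτ)) hYX

end Ancient

/-! ### The Pöschl–Teller potential -/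

lemma cosh_le_exp_abs_sub_mul_cosh (x y : ℝ) : cosh y ≤ exp |y - x| * cosh x := by
  have hsinh : sinh (y - x) * sinh x ≤ sinh |y - x| * cosh x := by
    refine (le_abs_self _).trans ?_
    rw [abs_mul, abs_sinh, abs_sinh x, ← cosh_abs x]
    exact mul_le_mul_of_nonneg_left (sinh_lt_cosh _).le (sinh_nonneg_iff.2 (abs_nonneg _))
  calc cosh y = cosh |y - x| * cosh x + sinh (y - x) * sinh x := by
        rw [cosh_abs, ← cosh_add, sub_add_cancel]
    _ ≤ (cosh |y - x| + sinh |y - x|) * cosh x := by linarith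
    _ = exp |y - x| * cosh x := by rw [cosh_add_sinh]

section CoshGrowth

variable {v : ℝ → ℝ → ℝ} {A C k : ℝ}

lemma heatBoundedOn_of_cosh_growth (hA : 0 ≤ A) (hC : 0 < C) (hk : 0 ≤ k)
    (hop : ∀ t < 0, ∀ x, ∃ c, |c| ≤ A * |v t x| ∧ HasHeatOpAt v c t x)
    (hbd : ∀ t < 0, ∀ x, |v t x| ≤ C * cosh x ^ k) (x : ℝ) :
    HeatBoundedOn ((A + 1) * (C * exp k * cosh x ^ k)) v (Iio 0 ×ˢ Icc (x - 1) (x + 1)) := by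
  rintro t y ⟨ht, hy⟩
  have hB : 0 < C * exp k * cosh x ^ k := by
    have := cosh_pos x
    positivity
  have hcosh : cosh y ≤ exp 1 * cosh x :=
    (cosh_le_exp_abs_sub_mul_cosh x y).trans (mul_le_mul_of_nonneg_right
      (exp_le_exp.2 (abs_sub_le_iff.2 ⟨by linarith [hy.2], by linarith [hy.1]⟩)) (cosh_pos x).le)
  have hv : |v t y| ≤ C * exp k * cosh x ^ k := by
    calc |v t y| ≤ C * cosh y ^ k := hbd t ht y
      _ ≤ C * (exp 1 * cosh x) ^ k := by
          have := cosh_pos y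
          gcongr
      _ = C * exp k * cosh x ^ k := by
          rw [mul_rpow (exp_pos 1).le (cosh_pos x).le, exp_one_rpow, mul_assoc]
  obtain ⟨c, hc, hvc⟩ := hop t ht y
  exact ⟨by nlinarith, c, by nlinarith, hvc⟩

lemma continuousAt_of_cosh_growth (hA : 0 ≤ A) (hC : 0 < C) (hk : 0 ≤ k)
    (hop : ∀ t < 0, ∀ x, ∃ c, |c| ≤ A * |v t x| ∧ HasHeatOpAt v c t x)
    (hbd : ∀ t < 0, ∀ x, |v t x| ≤ C * cosh x ^ k) :
    ∀ t < 0, ∀ x, ContinuousAt (Function.uncurry v) (t, x) := fun t ht x =>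
  continuousAt_of_heatBoundedOn (isOpen_Iio.prod isOpen_univ) (fun p hp =>
    ⟨_, _, prod_mem_nhds (Iio_mem_nhds hp.1) (Icc_mem_nhds (sub_one_lt p.2) (lt_add_one p.2)),
      heatBoundedOn_of_cosh_growth hA hC hk hop hbd p.2⟩) (t, x) ⟨ht, mem_univ x⟩

lemma abs_deriv_le_of_cosh_growth (hA : 0 ≤ A) (hC : 0 < C) (hk : 0 ≤ k)
    (hop : ∀ t < 0, ∀ x, ∃ c, |c| ≤ A * |v t x| ∧ HasHeatOpAt v c t x)
    (hbd : ∀ t < 0, ∀ x, |v t x| ≤ C * cosh x ^ k) :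
    ∀ t < 0, ∀ x, |deriv (v t) x| ≤ 4 * (A + 1) * C * exp k * cosh x ^ k := by
  intro t ht x
  have hsub : Icc (t - 1) t ×ˢ Icc (x - 1) (x + 1) ⊆ Iio 0 ×ˢ Icc (x - 1) (x + 1) :=
    prod_mono (fun s hs => hs.2.trans_lt ht) Subset.rfl
  refine (((heatBoundedOn_of_cosh_growth hA hC hk hop hbd x).mono hsub).abs_deriv_le
    fun p hp => ?_).trans_eq (by ring)
  exact (continuousAt_of_cosh_growth hA hC hk hop hbd p.1 (hsub hp).1 p.2).continuousWithinAt

end CoshGrowth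

section PoschlTeller

variable {v : ℝ → ℝ → ℝ} {C k m t x : ℝ}

lemma hasDerivAt_mul_cosh_rpow {g : ℝ → ℝ} (hg : DifferentiableAt ℝ g x) (m : ℝ) :
    HasDerivAt (fun y => g y * cosh y ^ m) ((deriv g x + m * tanh x * g x) * cosh x ^ m) x :=
  (hg.hasDerivAt.fun_mul (hasDerivAt_cosh_rpow m x)).congr_deriv (by ring)

lemma abs_deriv_mul_cosh_rpow_le {g : ℝ → ℝ} {K : ℝ} (hg : DifferentiableAt ℝ g x) (hm : 0 ≤ m)
    (hbd : |g x| ≤ C * cosh x ^ k) (hderiv : |deriv g x| ≤ K * cosh x ^ k) :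
    |deriv (fun y => g y * cosh y ^ m) x| ≤ (K + m * C) * cosh x ^ (k + m) := by
  have hc := cosh_pos x
  have htanh : |m * tanh x * g x| ≤ m * (C * cosh x ^ k) := by
    rw [mul_assoc, abs_mul, abs_mul, abs_of_nonneg hm]
    exact mul_le_mul_of_nonneg_left
      ((mul_le_of_le_one_left (abs_nonneg _) (abs_tanh_lt_one x).le).trans hbd) hm
  rw [(hasDerivAt_mul_cosh_rpow hg m).deriv, rpow_add hc, abs_mul,
    abs_of_pos (rpow_pos_of_pos hc m), ← mul_assoc]
  gcongr
  linarith [abs_add_le (deriv g x) (m * tanh x * g x)]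

/-- Dividing by the ground state `cosh ^ (-m)` turns the potential into a drift. -/
lemma HasHeatOpAt.mul_cosh_rpow
    (hv : HasHeatOpAt v ((m - m * (m + 1) * tanh x ^ 2) * v t x) t x) :
    HasHeatOpAt (fun s y => v s y * cosh y ^ m)
      (-(2 * m * tanh x * deriv (fun y => v t y * cosh y ^ m) x)) t x := by
  refine (hv.mul_space (hasDerivAt_cosh_rpow m)
    ((hasDerivAt_tanh_mul_cosh_rpow m x).const_mul m)).congr_value ?_
  rw [(hasDerivAt_mul_cosh_rpow hv.differentiableAt_space m).deriv]
  ring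

lemma abs_poschlTeller_le (hm : 0 ≤ m) (x : ℝ) :
    |m - m * (m + 1) * tanh x ^ 2| ≤ m * (m + 1) := by
  have hmm : 0 ≤ m * (m + 1) := by positivity
  rw [abs_le]
  constructor <;> nlinarith [sq_nonneg (tanh x), tanh_sq_lt_one x]

theorem mul_cosh_rpow_eq_of_ancient (hm : 1 ≤ m) (hC : 0 < C) (hk : 0 ≤ k) (hkm : k < m)
    (hop : ∀ t < 0, ∀ x, HasHeatOpAt v ((m - m * (m + 1) * tanh x ^ 2) * v t x) t x)
    (hbd : ∀ t < 0, ∀ x, |v t x| ≤ C * cosh x ^ k) :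
    ∀ t < 0, ∀ x, v t x * cosh x ^ m = v t 0 := by
  have hm₀ : 0 ≤ m := zero_le_one.trans hm
  have hpot (t : ℝ) (ht : t < 0) (x : ℝ) :
      ∃ c, |c| ≤ m * (m + 1) * |v t x| ∧ HasHeatOpAt v c t x :=
    ⟨_, (abs_mul _ _).trans_le (mul_le_mul_of_nonneg_right (abs_poschlTeller_le hm₀ x)
      (abs_nonneg _)), hop t ht x⟩
  have hcont (t : ℝ) (ht : t < 0) (x : ℝ) :
      ContinuousAt (Function.uncurry fun s y => v s y * cosh y ^ m) (t, x) :=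
    (continuousAt_of_cosh_growth (by positivity) hC hk hpot hbd t ht x).mul
      ((hasDerivAt_cosh_rpow m x).continuousAt.comp' (x := (t, x)) continuousAt_snd)
  have hgrad (t : ℝ) (ht : t < 0) (x : ℝ) := abs_deriv_mul_cosh_rpow_le
    (hop t ht x).differentiableAt_space hm₀ (hbd t ht x)
    (abs_deriv_le_of_cosh_growth (by positivity) hC hk hpot hbd t ht x)
  have hdrift (t : ℝ) (ht : t < 0) (x : ℝ) := (hop t ht x).mul_cosh_rpow
  intro t ht x
  have hanti : Antitone fun y => v t y * cosh y ^ m :=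
    antitone_of_ancient (by linarith) (by linarith) hcont hdrift hgrad t ht
  have hmono : Antitone fun y => -(v t y * cosh y ^ m) :=
    antitone_of_ancient (q := fun s y => -(v s y * cosh y ^ m)) (by linarith)
      (by linarith : k + m < 2 * m) (fun t ht x => (hcont t ht x).neg)
      (fun t ht x => (hdrift t ht x).neg.congr_value (by rw [deriv.fun_neg]; ring))
      (fun t ht x => by rw [deriv.fun_neg, abs_neg]; exact hgrad t ht x) t ht
  have hzero : v t 0 * cosh 0 ^ m = v t 0 := by rw [cosh_zero, one_rpow, mul_one]
  rw [← hzero]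
  rcases le_total x 0 with hx | hx
  · exact le_antisymm (neg_le_neg_iff.1 (hmono hx)) (hanti hx)
  · exact le_antisymm (hanti hx) (neg_le_neg_iff.1 (hmono hx))

end PoschlTeller

/-! ### Linearization at the heteroclinic profile -/

lemma w1_eq (s : ℝ) : w1 s = (√2 * cosh (s / √2) ^ 2)⁻¹ := by
  have hw : HasDerivAt w ((1 - tanh (s / √2) ^ 2) * (1 / √2)) s :=
    (hasDerivAt_tanh (s / √2)).comp s ((hasDerivAt_id s).div_const √2)
  have hc := (cosh_pos (s / √2)).ne'
  rw [w1, hw.deriv, tanh_eq_sinh_div_cosh, div_pow, sinh_sq]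
  field_simp
  ring

lemma w1_pos (s : ℝ) : 0 < w1 s := by
  have := cosh_pos (s / √2)
  rw [w1_eq]
  positivity

lemma continuous_w1 : Continuous w1 := by
  rw [funext w1_eq]
  exact Continuous.inv₀ (by fun_prop) fun s => by have := cosh_pos (s / √2); positivity

lemma f1_eq (v : ℝ) : f1 v = 1 - 3 * v ^ 2 := by
  have hf : HasDerivAt (fun v : ℝ => v * (1 - v ^ 2)) (1 * (1 - v ^ 2) + v * (-(2 * v))) v := by
    simpa using (hasDerivAt_id v).fun_mul ((hasDerivAt_pow 2 v).const_sub 1)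
  calc f1 v = 1 * (1 - v ^ 2) + v * (-(2 * v)) := hf.deriv
    _ = 1 - 3 * v ^ 2 := by ring

lemma one_add_sq_le_cosh_sq (x : ℝ) : 1 + x ^ 2 ≤ cosh x ^ 2 := by
  rw [cosh_sq', ← sq_abs x, ← sq_abs (sinh x), abs_sinh]
  gcongr
  exact self_le_sinh_iff.2 (abs_nonneg x)

lemma w1_sq_le (s : ℝ) : w1 s ^ 2 ≤ (1 + (s / √2) ^ 2)⁻¹ := by
  have hone : 1 ≤ cosh (s / √2) ^ 2 := one_le_pow₀ (one_le_cosh _)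
  rw [w1_eq, inv_pow, mul_pow, sq_sqrt two_pos.le]
  refine inv_anti₀ (by positivity) ((one_add_sq_le_cosh_sq _).trans ?_)
  nlinarith

lemma integral_w1_sq_pos : 0 < ∫ s, w1 s ^ 2 := by
  have hint : Integrable fun s => w1 s ^ 2 :=
    (integrable_inv_one_add_sq.comp_div (sqrt_pos.2 two_pos).ne').mono'
      (continuous_w1.pow 2).aestronglyMeasurable
      (.of_forall fun s => by rw [norm_of_nonneg (sq_nonneg _)]; exact w1_sq_le s)
  exact integral_pos_of_integrable_nonneg_nonzero (x := 0) (continuous_w1.pow 2) hint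
    (fun s => sq_nonneg _) (pow_pos (w1_pos 0) 2).ne'

lemma eq_zero_of_integral_mul_w1_eq_zero {g : ℝ → ℝ} {a x₀ : ℝ}
    (hg : ∀ x, g x = a * w1 (x + x₀)) (hort : ∫ x, g x * w1 (x + x₀) = 0) : a = 0 := by
  simp only [hg, mul_assoc, ← sq] at hort
  rw [integral_const_mul, integral_add_right_eq_self fun x => w1 x ^ 2] at hort
  exact (mul_eq_zero.1 hort).resolve_right integral_w1_sq_pos.ne'

lemma exp_mul_abs_le_cosh_rpow {k : ℝ} (hk : 0 ≤ k) (x : ℝ) :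
    exp (k * |x|) ≤ 2 ^ k * cosh x ^ k := by
  have hexp : exp |x| ≤ 2 * cosh x := by
    rw [← cosh_abs, cosh_eq]
    linarith [exp_pos (-|x|)]
  rw [mul_comm, exp_mul, ← mul_rpow two_pos.le (cosh_pos x).le]
  exact rpow_le_rpow (exp_pos _).le hexp hk

lemma exp_mul_abs_mul_sub_le {σ a : ℝ} (hσ : 0 ≤ σ) (ha : 0 ≤ a) (b x : ℝ) :
    exp (σ * |a * x - b|) ≤ exp (σ * |b|) * 2 ^ (σ * a) * cosh x ^ (σ * a) := by
  have habs : |a * x - b| ≤ a * |x| + |b| :=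
    (abs_sub _ _).trans_eq (by rw [abs_mul, abs_of_nonneg ha])
  calc exp (σ * |a * x - b|) ≤ exp (σ * |b|) * exp (σ * a * |x|) := by
        rw [← exp_add, exp_le_exp]
        nlinarith
    _ ≤ exp (σ * |b|) * 2 ^ (σ * a) * cosh x ^ (σ * a) := by
        rw [mul_assoc (exp _)]
        exact mul_le_mul_of_nonneg_left (exp_mul_abs_le_cosh_rpow (by positivity) x) (exp_pos _).le

section Linearization

variable {φ : ℝ → ℝ → ℝ} {x₀ σ C t x : ℝ}

lemma HasHeatOpAt.poschlTeller_rescale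
    (hφ : HasHeatOpAt φ (f1 (w (√2 * x - x₀ + x₀)) * φ (2 * t) (√2 * x - x₀)) (2 * t)
      (√2 * x - x₀)) :
    HasHeatOpAt (fun s y => φ (2 * s) (√2 * y - x₀))
      ((2 - 2 * (2 + 1) * tanh x ^ 2) * φ (2 * t) (√2 * x - x₀)) t x := by
  have hsq : √2 ^ 2 = (2 : ℝ) := sq_sqrt two_pos.le
  have hpot : 2 * f1 (w (√2 * x - x₀ + x₀)) = 2 - 2 * (2 + 1) * tanh x ^ 2 := by
    rw [f1_eq, w, sub_add_cancel, mul_div_cancel_left₀ x (sqrt_pos.2 two_pos).ne']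
    ring
  have hresc := HasHeatOpAt.comp_affine (k := √2) (r := 0) (b := -x₀) (t := t) (x := x)
    (by simpa only [hsq, add_zero, ← sub_eq_add_neg] using hφ)
  simp only [hsq, add_zero, ← sub_eq_add_neg] at hresc
  exact hresc.congr_value (by rw [← hpot, mul_assoc])

lemma eq_mul_w1_of_ancient (hσ₀ : 0 ≤ σ) (hσ : σ < √2) (hC : 0 < C)
    (hop : ∀ t < 0, ∀ x, HasHeatOpAt φ (f1 (w (x + x₀)) * φ t x) t x)
    (hbd : ∀ t < 0, ∀ x, |φ t x| ≤ C * exp (σ * |x|)) :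
    ∀ t < 0, ∀ x, φ t x = √2 * φ t (-x₀) * w1 (x + x₀) := by
  intro t ht x
  have hk : σ * √2 < 2 := by
    calc σ * √2 < √2 * √2 := by gcongr
      _ = 2 := mul_self_sqrt two_pos.le
  have hgrowth (t : ℝ) (ht : t < 0) (x : ℝ) : |φ (2 * t) (√2 * x - x₀)| ≤
      C * (exp (σ * |x₀|) * 2 ^ (σ * √2)) * cosh x ^ (σ * √2) := by
    rw [mul_assoc]
    exact (hbd (2 * t) (by linarith) _).trans (mul_le_mul_of_nonneg_left
      (exp_mul_abs_mul_sub_le hσ₀ (sqrt_nonneg 2) x₀ x) hC.le)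
  have hconst := mul_cosh_rpow_eq_of_ancient (v := fun s y => φ (2 * s) (√2 * y - x₀))
    one_le_two (by positivity) (by positivity) hk
    (fun t ht x => (hop (2 * t) (by linarith) _).poschlTeller_rescale) hgrowth
    (t / 2) (by linarith) ((x + x₀) / √2)
  have h2 : √2 ≠ 0 := (sqrt_pos.2 two_pos).ne'
  rw [mul_div_cancel₀ t two_ne_zero, mul_div_cancel₀ _ h2, add_sub_cancel_right, mul_zero,
    zero_sub, rpow_two] at hconst
  have hc := (cosh_pos ((x + x₀) / √2)).ne'
  rw [w1_eq, ← hconst]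
  field_simp

end Linearization

lemma eq_of_forall_lt_eq_of_continuousAt {α β : Type*} [Preorder α] [TopologicalSpace α]
    [TopologicalSpace β] [T2Space β] {g : α → β} {a : β} {b : α} [(𝓝[<] b).NeBot]
    (hg : ContinuousAt g b) (h : ∀ t < b, g t = a) : g b = a :=
  tendsto_nhds_unique_of_eventuallyEq (l := 𝓝[<] b)
    (hg.tendsto.mono_left nhdsWithin_le_nhds) tendsto_const_nhds (eventually_mem_nhdsWithin.mono h)

/-- An ancient solution of `φ_t = φ_xx + f'(w(x+x₀))φ` with subcritical exponential growth
which is orthogonal to `w'(·+x₀)` for all times vanishes identically. -/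
theorem stmt_13 (x₀ σ : ℝ) (hσ : σ ∈ Set.Ioo 0 (Real.sqrt 2)) (φ : ℝ → ℝ → ℝ)
    (hreg : ∀ t ≤ (0 : ℝ), ∀ x : ℝ,
      DifferentiableAt ℝ (φ t) x ∧ DifferentiableAt ℝ (deriv (φ t)) x)
    (hpde : ∀ t ≤ (0 : ℝ), ∀ x : ℝ,
      HasDerivAt (fun s => φ s x) (deriv (deriv (φ t)) x + f1 (w (x + x₀)) * φ t x) t)
    (C : ℝ) (hC : 0 < C)
    (hbd : ∀ t ≤ (0 : ℝ), ∀ x : ℝ, |φ t x| ≤ C * Real.exp (σ * |x|))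
    (hort : ∀ t ≤ (0 : ℝ), (∫ x : ℝ, φ t x * w1 (x + x₀)) = 0) :
    ∀ t ≤ (0 : ℝ), ∀ x : ℝ, φ t x = 0 := by
  have hop (t : ℝ) (ht : t < 0) (x : ℝ) : HasHeatOpAt φ (f1 (w (x + x₀)) * φ t x) t x :=
    ⟨deriv (φ t), _, _, .of_forall fun y => (hreg t ht.le y).1.hasDerivAt,
      (hreg t ht.le x).2.hasDerivAt, hpde t ht.le x, add_sub_cancel_left _ _⟩
  have hneg (t : ℝ) (ht : t < 0) (x : ℝ) : φ t x = 0 := by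
    have hprofile := eq_mul_w1_of_ancient hσ.1.le hσ.2 hC hop (fun t ht => hbd t ht.le) t ht
    rw [hprofile, eq_zero_of_integral_mul_w1_eq_zero hprofile (hort t ht.le), zero_mul]
  intro t ht x
  exact eq_of_forall_lt_eq_of_continuousAt (g := fun s => φ s x)
    (hpde t ht x).continuousAt fun s hs => hneg s (hs.trans_le ht) x

end
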